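/- arXiv:2504.05027 — 2 statements merged into one kernel-verified Lean document; each statement's English description precedes it below -/
import Mathlib

section
/- Let P_λ be the law of the Poisson point measure on X with intensity λμ_X, and let 0 < λ₁ < λ₂. Assume that under P_{λ₁} the expected number of connected components of V ∩ B(0,1) is finite. If P_{λ₂}[N_V = 1] = 1, then P_{λ₁}[N_V = 1] = 1. -/
open MeasureTheory Metric Set Bornology Function
open scoped ENNReal NNReal unitInterval

noncomputable section

namespace BooleanModel

/-- The space of simple, locally finite point configurations on a metric space `X`
(realizations of simple counting measures on `X`). -/
def Config (X : Type*) [MetricSpace X] : Type _ :=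
  {s : Set X // ∀ K : Set X, IsBounded K → (s ∩ K).Finite}

namespace Config

variable {X : Type*} [MetricSpace X]

/-- The σ-algebra on `Config X` generated by the evaluation (counting) maps `ω ↦ ω(B)`. -/
instance instMeasurableSpace [MeasurableSpace X] : MeasurableSpace (Config X) :=
  MeasurableSpace.generateFrom
    {A | ∃ (B : Set X) (n : ℕ∞), MeasurableSet B ∧ A = {s : Config X | (s.1 ∩ B).encard = n}}

/-- The number of points of the configuration `s` lying in `B`. -/
def count (B : Set X) (s : Config X) : ℕ∞ := (s.1 ∩ B).encard

/-- Adding a point to a configuration (`ω + δ_y`). -/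
def insertPt (y : X) (s : Config X) : Config X :=
  ⟨insert y s.1, by
    intro K hK
    refine ((s.2 K hK).insert y).subset ?_
    rintro z ⟨hz1, hz2⟩
    rcases Set.mem_insert_iff.1 hz1 with rfl | h
    · exact Set.mem_insert _ _
    · exact Set.mem_insert_of_mem _ ⟨h, hz2⟩⟩

/-- The restriction `ω|_{B^c}` of a configuration to the complement of `B`. -/
def restrict (B : Set X) (s : Config X) : Config X :=
  ⟨s.1 ∩ Bᶜ, fun K hK => (s.2 K hK).subset fun z hz => ⟨hz.1.1, hz.2⟩⟩

/-- Push-forward of a configuration under an isometry of `X`. -/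
def mapIso (γ : X ≃ᵢ X) (s : Config X) : Config X :=
  ⟨⇑γ '' s.1, by
    intro K hK
    have h1 : ⇑γ ⁻¹' K = ⇑γ.symm '' K := by
      ext z
      constructor
      · intro hz; exact ⟨γ z, hz, γ.symm_apply_apply z⟩
      · rintro ⟨w, hw, rfl⟩; simpa using hw
    have h2 : ⇑γ '' s.1 ∩ K = ⇑γ '' (s.1 ∩ ⇑γ ⁻¹' K) := (Set.image_inter_preimage _ _ _).symm
    rw [h2]
    refine (s.2 _ ?_).image _
    rw [h1]
    exact γ.symm.isometry.lipschitz.isBounded_image hK⟩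

end Config

section BasicDefs

variable {X : Type*} [MetricSpace X]

/-- The occupied set of the Boolean model with unit radii driven by `s`. -/
def occupied (s : Config X) : Set X := ⋃ x ∈ s.1, closedBall x 1

/-- The vacant set of the Boolean model with unit radii driven by `s`. -/
def vacant (s : Config X) : Set X := (occupied s)ᶜ

/-- The collection of connected components of a set `S ⊆ X`. -/
def comps (S : Set X) : Set (Set X) := {C | ∃ x ∈ S, C = connectedComponentIn S x}

/-- The collection of unbounded connected components of `S`. -/
def ucomps (S : Set X) : Set (Set X) := {C | C ∈ comps S ∧ ¬IsBounded C}

/-- The number of connected components of `S`. -/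
def numComps (S : Set X) : ℕ∞ := (comps S).encard

/-- `N_S`: the number of unbounded connected components of `S`. -/
def numUcomps (S : Set X) : ℕ∞ := (ucomps S).encard

/-- A metric space is point-symmetric (the metric counterpart of being a Riemannian
symmetric space) if every point `x` admits a geodesic-reversing isometry fixing `x`,
i.e. an isometric point reflection around `x`. -/
def PointSymmetric (X : Type*) [MetricSpace X] : Prop :=
  ∀ x : X, ∃ invol : X ≃ᵢ X, invol x = x ∧ ∀ y : X, dist y (invol y) = 2 * dist x y

/-- The local connected component `C_S(y,r)`. -/
def localComp (S : Set X) (y : X) (r : ℝ) : Set X :=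
  connectedComponentIn (S ∩ closedBall y r) y

end BasicDefs

section MeasureDefs

variable {X : Type*} [MetricSpace X] [MeasurableSpace X]

/-- A measure on `Config X` is isometry invariant if it is preserved by the push-forward
action of every isometry of `X`. -/
def IsoInvariant (P : Measure (Config X)) : Prop :=
  ∀ γ : X ≃ᵢ X, Measure.map (Config.mapIso γ) P = P

/-- Every isometry-invariant event has probability `0` or `1`. -/
def ErgodicIso (P : Measure (Config X)) : Prop :=
  ∀ E : Set (Config X), MeasurableSet E →
    (∀ γ : X ≃ᵢ X, Config.mapIso γ ⁻¹' E = E) → P E = 0 ∨ P E = 1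

/-- `P` is insertion-tolerant: for every Borel `B` with `0 < μ B < ∞`, the law of
`ω + δ_Y` with `Y` uniform in `B` independent of `ω` is absolutely continuous w.r.t. `P`. -/
def InsertionTolerant (μ : Measure X) (P : Measure (Config X)) : Prop :=
  ∀ B : Set X, MeasurableSet B → 0 < μ B → μ B < ⊤ →
    Measure.map (fun p : Config X × X => Config.insertPt p.2 p.1)
      (P.prod ((μ B)⁻¹ • μ.restrict B)) ≪ P

/-- `P` is deletion-tolerant: for every Borel `B` with `0 < μ B < ∞`, the law of
`ω|_{B^c}` is absolutely continuous w.r.t. `P`. -/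
def DeletionTolerant (μ : Measure X) (P : Measure (Config X)) : Prop :=
  ∀ B : Set X, MeasurableSet B → 0 < μ B → μ B < ⊤ →
    Measure.map (Config.restrict B) P ≪ P

/-- `P` is the law of the Poisson point measure on `X` with intensity `ν`:
counts in disjoint Borel sets are independent with the correct Poisson distributions. -/
def IsPoisson (ν : Measure X) (P : Measure (Config X)) : Prop :=
  IsProbabilityMeasure P ∧
  (∀ B : Set X, MeasurableSet B → ν B < ⊤ → ∀ k : ℕ,
      P {s : Config X | Config.count B s = k} =
        ENNReal.ofReal (Real.exp (-(ν B).toReal) * (ν B).toReal ^ k / (Nat.factorial k))) ∧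
  (∀ B : Set X, MeasurableSet B → ν B = ⊤ → P {s : Config X | (s.1 ∩ B).Infinite} = 1) ∧
  (∀ (n : ℕ) (B : Fin n → Set X) (k : Fin n → ℕ),
      (∀ i, MeasurableSet (B i)) → (Pairwise fun i j => Disjoint (B i) (B j)) →
      P {s : Config X | ∀ i, Config.count (B i) s = k i} =
        ∏ i, P {s : Config X | Config.count (B i) s = k i})

end MeasureDefs

section PathDefs

variable {X : Type*} [MetricSpace X]

/-- The intrinsic distance between `x` and `y` within the set `S`: the infimum of the lengths
of continuous paths from `x` to `y` whose range is contained in `S`. -/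
def pathDistIn (S : Set X) (x y : X) : ℝ≥0∞ :=
  ⨅ (γ : Path x y) (_ : Set.range ⇑γ ⊆ S), eVariationOn ⇑γ Set.univ

/-- Intrinsic distance within `S` between two subsets `A` and `B`. -/
def setDistIn (S A B : Set X) : ℝ≥0∞ :=
  ⨅ (a : X) (_ : a ∈ A) (b : X) (_ : b ∈ B), pathDistIn S a b

/-- `y` is an `r`-trifurcation (marked by a point of `Y`) for the set `S`. -/
def IsTrifurcation (S : Set X) (Y : Set X) (r : ℝ) (y : X) : Prop :=
  y ∈ Y ∧ closedBall y 1 ⊆ S ∧ (∀ y' ∈ Y, y' ≠ y → 2 * r < dist y y') ∧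
    3 ≤ numUcomps (connectedComponentIn S y \ localComp S y r)

end PathDefs

end BooleanModel
namespace BooleanModel

/-!
Couple the two models: the superposition of `P₁` with an independent Poisson process `P₃` of
intensity `(lam₂ - lam₁) • μ` has law `P₂`. Write `V` for the vacant set of the first process and
`W ⊆ V` for that of the superposition, and suppose that `V` has an unbounded component `C` missing
the unbounded component of `W`. Moving the points of a large ball from the first process to the
second leaves the joint law absolutely continuous and does not change `W`, and it joins `C` to the
unbounded component of `W` inside `V`. So it suffices to exclude the joined situation.

Let every point `x` send unit mass to the places where the component of `V` near `x` first meets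
the unbounded part of `W`. In the joined situation some point receives mass from a neighbourhood
of the whole of `C`, hence infinite mass. But the isometry group is unimodular, being generated
by the point reflections up to a compact stabilizer, so by the mass transport principle the
expected mass received at the origin equals the expected mass sent from it, which is at most a
constant times the expected number of components of `V` in the unit ball, hence finite.

Laws of point processes are compared through their void probabilities, which form a π-system.
-/

/-! ### The isometry group of a metric space -/

section IsometryGroup

open Filter Topology

variable {X : Type*} [MetricSpace X]

lemma dist_inv_apply_left (g : X ≃ᵢ X) (x y : X) : dist (g⁻¹ x) y = dist x (g y) := by
  rw [← g.dist_eq, g.apply_inv_self]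

/-- The topology of pointwise convergence on the isometry group. -/
instance instTopologicalSpaceIsometryEquiv : TopologicalSpace (X ≃ᵢ X) :=
  TopologicalSpace.induced (fun g => (g : X → X)) inferInstance

lemma continuous_isometryEquiv_coe : Continuous fun g : X ≃ᵢ X => (g : X → X) :=
  continuous_induced_dom

lemma continuous_isometryEquiv_eval (x : X) : Continuous fun g : X ≃ᵢ X => g x :=
  (continuous_apply x).comp continuous_isometryEquiv_coe

lemma continuous_isometryEquiv_iff {Y : Type*} [TopologicalSpace Y] {f : Y → X ≃ᵢ X} :
    Continuous f ↔ ∀ x, Continuous fun y => f y x :=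
  continuous_induced_rng.trans continuous_pi_iff

lemma continuous_isometryEquiv_apply : Continuous fun p : (X ≃ᵢ X) × X => p.1 p.2 := by
  refine continuous_iff_continuousAt.2 fun ⟨g, x⟩ => tendsto_iff_dist_tendsto_zero.2 ?_
  have hbound : Continuous fun p : (X ≃ᵢ X) × X => dist p.2 x + dist (p.1 x) (g x) :=
    (continuous_snd.dist continuous_const).add
      (((continuous_isometryEquiv_eval x).comp continuous_fst).dist continuous_const)
  refine squeeze_zero (fun _ => dist_nonneg) (fun p => ?_) (by simpa using hbound.tendsto (g, x))
  calc dist (p.1 p.2) (g x) ≤ dist (p.1 p.2) (p.1 x) + dist (p.1 x) (g x) := dist_triangle ..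
    _ = dist p.2 x + dist (p.1 x) (g x) := by rw [p.1.dist_eq]

instance instIsTopologicalGroupIsometryEquiv : IsTopologicalGroup (X ≃ᵢ X) where
  continuous_mul := continuous_isometryEquiv_iff.2 fun x =>
    continuous_isometryEquiv_apply.comp
      (continuous_fst.prodMk ((continuous_isometryEquiv_eval x).comp continuous_snd))
  continuous_inv := by
    refine continuous_isometryEquiv_iff.2 fun x => continuous_iff_continuousAt.2 fun g =>
      tendsto_iff_dist_tendsto_zero.2 ?_
    have hdist : Continuous fun h : X ≃ᵢ X => dist x (h (g⁻¹ x)) :=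
      continuous_const.dist (continuous_isometryEquiv_eval _)
    simpa [dist_inv_apply_left] using hdist.tendsto g

instance instT2SpaceIsometryEquiv : T2Space (X ≃ᵢ X) :=
  T2Space.of_injective_continuous DFunLike.coe_injective continuous_isometryEquiv_coe

instance instMeasurableSpaceIsometryEquiv : MeasurableSpace (X ≃ᵢ X) := borel _

instance instBorelSpaceIsometryEquiv : BorelSpace (X ≃ᵢ X) := ⟨rfl⟩

/-- Isometries of `X` are the pairs of maps `f`, `h` with `dist (f x) y = dist x (h y)`, a closed
condition for pointwise convergence. -/
lemma range_isometryEquiv_prod_inv :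
    range (fun g : X ≃ᵢ X => ((g : X → X), ((g⁻¹ : X ≃ᵢ X) : X → X))) =
      {p | ∀ x y, dist (p.1 x) y = dist x (p.2 y)} := by
  ext ⟨f, h⟩
  simp only [mem_range, Prod.mk.injEq, mem_ofPred_eq]
  constructor
  · rintro ⟨g, rfl, rfl⟩ x y
    rw [dist_comm x, dist_inv_apply_left, dist_comm]
  · intro hfh
    have hleft : LeftInverse h f := fun x => by
      rw [← dist_eq_zero, dist_comm, ← hfh, dist_self]
    have hright : Function.RightInverse h f := fun y => by
      rw [← dist_eq_zero, hfh, dist_self]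
    have hisom : Isometry f := Isometry.of_dist_eq fun x y => by rw [hfh, hleft]
    exact ⟨⟨⟨f, h, hleft, hright⟩, hisom⟩, rfl, rfl⟩

lemma isClosedEmbedding_isometryEquiv_prod_inv :
    IsClosedEmbedding fun g : X ≃ᵢ X => ((g : X → X), ((g⁻¹ : X ≃ᵢ X) : X → X)) where
  toIsInducing := .of_comp
    (continuous_isometryEquiv_coe.prodMk (continuous_isometryEquiv_coe.comp continuous_inv))
    continuous_fst ⟨rfl⟩
  injective := fun _ _ h => DFunLike.coe_injective (Prod.ext_iff.1 h).1
  isClosed_range := by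
    simp only [range_isometryEquiv_prod_inv, ofPred_forall]
    exact isClosed_iInter fun x => isClosed_iInter fun y => isClosed_eq (by fun_prop) (by fun_prop)

lemma isCompact_setOf_dist_isometryEquiv_le [ProperSpace X] (o : X) (r : ℝ) :
    IsCompact {g : X ≃ᵢ X | dist (g o) o ≤ r} := by
  have hbound {g : X ≃ᵢ X} (hg : dist (g o) o ≤ r) (x : X) : dist (g x) o ≤ r + dist x o := by
    linarith [dist_triangle (g x) (g o) o, g.dist_eq x o]
  have hpi : IsCompact (univ.pi fun x => closedBall o (r + dist x o)) :=
    isCompact_univ_pi fun x => isCompact_closedBall o _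
  refine (isClosedEmbedding_isometryEquiv_prod_inv.isCompact_preimage
    (hpi.prod hpi)).of_isClosed_subset
      (isClosed_le ((continuous_isometryEquiv_eval o).dist continuous_const) continuous_const) ?_
  have hinv {g : X ≃ᵢ X} (hg : dist (g o) o ≤ r) : dist (g⁻¹ o) o ≤ r := by
    rwa [dist_inv_apply_left, dist_comm]
  exact fun g hg => ⟨fun x _ => hbound hg x, fun x _ => hbound (hinv hg) x⟩

lemma isOpen_setOf_dist_isometryEquiv_lt (x y : X) (r : ℝ) :
    IsOpen {g : X ≃ᵢ X | dist (g x) y < r} :=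
  isOpen_lt ((continuous_isometryEquiv_eval x).dist continuous_const) continuous_const

instance instLocallyCompactSpaceIsometryEquiv [ProperSpace X] :
    LocallyCompactSpace (X ≃ᵢ X) := by
  rcases isEmpty_or_nonempty X with hX | ⟨⟨o⟩⟩
  · have : Subsingleton (X ≃ᵢ X) := ⟨fun g h => IsometryEquiv.ext fun x => hX.elim x⟩
    infer_instance
  · refine (isCompact_setOf_dist_isometryEquiv_le o 1).locallyCompactSpace_of_mem_nhds_of_group
      (x := 1) (mem_of_superset ((isOpen_setOf_dist_isometryEquiv_lt o o 1).mem_nhds (by simp)) ?_)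
    exact fun g (hg : dist (g o) o < 1) => hg.le

instance instSigmaCompactSpaceIsometryEquiv [ProperSpace X] : SigmaCompactSpace (X ≃ᵢ X) := by
  rcases isEmpty_or_nonempty X with hX | ⟨⟨o⟩⟩
  · have : Subsingleton (X ≃ᵢ X) := ⟨fun g h => IsometryEquiv.ext fun x => hX.elim x⟩
    infer_instance
  · exact ⟨⟨fun n : ℕ => {g | dist (g o) o ≤ n},
      fun n => isCompact_setOf_dist_isometryEquiv_le o n,
      iUnion_eq_univ_iff.2 fun g => exists_nat_ge (dist (g o) o)⟩⟩

end IsometryGroup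

/-! ### Point reflections -/

section Packing

variable {X Y : Type*} [MetricSpace X] [MetricSpace Y] {f : X → Y} {A : Set X} {B : Set Y}
  {K ε : ℝ≥0}

lemma packingNumber_le_of_antilipschitzWith (hf : AntilipschitzWith K f) (hK : 0 < K)
    (hAB : MapsTo f A B) : packingNumber ε A ≤ packingNumber (ε / K) B := by
  refine iSup₂_le fun C hCA => iSup_le fun hC => ?_
  rw [← hf.injective.encard_image]
  exact (hC.image_antilipschitz hf hK).encard_le_packingNumber
    ((image_mono hCA).trans hAB.image_subset)

/-- The image of a largest separated subset of `A` is then a largest, hence maximal, separated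
subset of `B`. -/
lemma isCover_image_of_packingNumber_le (hf : AntilipschitzWith K f) (hK : 0 < K)
    (hAB : MapsTo f A B) (hfin : packingNumber (ε / K) B ≠ ⊤)
    (hle : packingNumber (ε / K) B ≤ packingNumber ε A) : IsCover (ε / K) B (f '' A) := by
  have hfinA : packingNumber ε A ≠ ⊤ :=
    ((packingNumber_le_of_antilipschitzWith hf hK hAB).trans_lt hfin.lt_top).ne
  obtain ⟨C, hCA, hCfin, hC, hcard⟩ := exists_set_encard_eq_packingNumber hfinA
  refine IsCover.mono (image_mono hCA) (.of_maximal_isSeparated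
    ⟨⟨(image_mono hCA).trans hAB.image_subset, hC.image_antilipschitz hf hK⟩, fun D hD hCD => ?_⟩)
  have hDcard : D.encard ≤ (f '' C).encard := by
    rw [hf.injective.encard_image, hcard]
    exact (hD.2.encard_le_packingNumber hD.1).trans hle
  exact ((hCfin.image f).eq_of_subset_of_encard_le hCD hDcard).ge

lemma packingNumber_ne_top_of_isCompact (hA : IsCompact A) (hε : ε ≠ 0) :
    packingNumber ε A ≠ ⊤ := by
  obtain ⟨N, -, hNfin, hN⟩ := exists_finite_isCover_of_isCompact (ε := ε / 2) (by simpa) hA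
  refine ne_top_of_le_ne_top hNfin.encard_lt_top.ne ?_
  calc packingNumber ε A = packingNumber (2 * (ε / 2)) A := by rw [mul_div_cancel₀ _ two_ne_zero]
    _ ≤ externalCoveringNumber (ε / 2) A := packingNumber_two_mul_le_externalCoveringNumber _ _
    _ ≤ N.encard := hN.externalCoveringNumber_le_encard

end Packing

section Reflections

variable {X : Type*} [MetricSpace X]

/-- `τ` is an isometric point reflection around `a`: it fixes `a` and moves every point by twice its
distance to `a`. -/
def IsPointReflection (a : X) (τ : X ≃ᵢ X) : Prop :=
  τ a = a ∧ ∀ y, dist y (τ y) = 2 * dist a y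

lemma IsPointReflection.dist_center {a : X} {τ : X ≃ᵢ X} (h : IsPointReflection a τ) (y : X) :
    dist a (τ y) = dist a y := by
  conv_lhs => rw [← h.1, τ.dist_eq]

lemma IsPointReflection.inv {a : X} {τ : X ≃ᵢ X} (h : IsPointReflection a τ) :
    IsPointReflection a τ⁻¹ := by
  refine ⟨by rw [← dist_eq_zero, dist_inv_apply_left, h.1, dist_self], fun y => ?_⟩
  rw [dist_comm, dist_inv_apply_left, h.2]

/-- The triangle inequalities forced by the reflection are all equalities when `y`, `a`, `b` are
aligned in this order. -/
lemma IsPointReflection.dist_apply_of_aligned {a b y : X} {τ : X ≃ᵢ X}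
    (hτ : IsPointReflection b τ) {k : ℝ} (ha : dist a y = k * dist a b)
    (hb : dist b y = (k + 1) * dist a b) :
    dist b (τ y) = (k + 1) * dist b a ∧ dist a (τ y) = (k + 1 + 1) * dist b a := by
  rw [dist_comm b a, hτ.dist_center, hb]
  refine ⟨rfl, le_antisymm ?_ ?_⟩
  · linarith [dist_triangle a b (τ y), hτ.dist_center y]
  · linarith [dist_triangle y a (τ y), hτ.2 y, dist_comm y a]

lemma IsPointReflection.dist_pow_inv_mul_apply {a b : X} {α β : X ≃ᵢ X}
    (hα : IsPointReflection a α) (hβ : IsPointReflection b β) (n : ℕ) :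
    dist a (((α⁻¹ * β) ^ n) a) = n * (2 * dist a b) := by
  suffices h : dist a (((α⁻¹ * β) ^ n) a) = (2 * n : ℝ) * dist a b ∧
      dist b (((α⁻¹ * β) ^ n) a) = (2 * n + 1 : ℝ) * dist a b by linarith [h.1]
  induction n with
  | zero => simp [dist_comm]
  | succ n ih =>
    obtain ⟨hb, ha⟩ := hβ.dist_apply_of_aligned ih.1 ih.2
    rw [pow_succ', IsometryEquiv.mul_apply, IsometryEquiv.mul_apply]
    convert hα.inv.dist_apply_of_aligned hb ha using 3 <;> push_cast <;> ring

lemma dist_pow_apply_le (g : X ≃ᵢ X) (z : X) (n : ℕ) : dist z ((g ^ n) z) ≤ n * dist z (g z) := by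
  induction n with
  | zero => simp
  | succ n ih =>
    calc dist z ((g ^ (n + 1)) z) ≤ dist z ((g ^ n) z) + dist ((g ^ n) z) ((g ^ n) (g z)) :=
          dist_triangle ..
      _ ≤ (n + 1 : ℕ) * dist z (g z) := by rw [(g ^ n).dist_eq]; push_cast; linarith

/-- Two orbits of `g` stay at constant distance, so `g` has the same escape rate at all points. -/
lemma le_dist_apply_of_le_dist_pow_apply {g : X ≃ᵢ X} {a : X} {c : ℝ}
    (h : ∀ n : ℕ, n * c ≤ dist a ((g ^ n) a)) (z : X) : c ≤ dist z (g z) := by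
  by_contra! hlt
  obtain ⟨n, hn⟩ := exists_nat_gt (2 * dist a z / (c - dist z (g z)))
  rw [div_lt_iff₀ (sub_pos.2 hlt)] at hn
  have htri := dist_triangle4 a z ((g ^ n) z) ((g ^ n) a)
  rw [(g ^ n).dist_eq, dist_comm z a] at htri
  linarith [h n, dist_pow_apply_le g z n]

lemma IsPointReflection.two_mul_dist_le {a b : X} {α β : X ≃ᵢ X} (hα : IsPointReflection a α)
    (hβ : IsPointReflection b β) (z : X) : 2 * dist a b ≤ dist (α z) (β z) := by
  have h := le_dist_apply_of_le_dist_pow_apply (fun n => (hα.dist_pow_inv_mul_apply hβ n).ge) z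
  rwa [IsometryEquiv.mul_apply, dist_comm z, dist_inv_apply_left, dist_comm (β z)] at h

end Reflections

section Homogeneous

variable {X : Type*} [MetricSpace X]

/-- Doubling distances, `y ↦ τ y x` maps the ball of radius `2⁻ᵏ⁻¹` into that of radius `2⁻ᵏ`, so
the packing numbers of these balls at proportional scales decrease in `k`. Once they are constant
the image of each ball is a net of the next one. -/
lemma exists_isPointReflection_dist_le_pow [ProperSpace X] (hsym : PointSymmetric X) (x : X)
    {ε : ℝ≥0} (hε : 0 < ε) :
    ∃ k₀ : ℕ, ∀ k ≥ k₀, ∀ w, dist w x ≤ (1 / 2) ^ k →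
      ∃ y τ, IsPointReflection y τ ∧ dist (τ x) w ≤ ε * (1 / 2) ^ k := by
  choose τ hτ using hsym
  have hanti : AntilipschitzWith (1 / 2) fun y => τ y x :=
    AntilipschitzWith.of_le_mul_dist fun y z => by
      have h := IsPointReflection.two_mul_dist_le (hτ y) (hτ z) x
      push_cast
      linarith
  have hmaps (k : ℕ) :
      MapsTo (fun y => τ y x) (closedBall x ((1 / 2) ^ (k + 1))) (closedBall x ((1 / 2) ^ k)) := by
    intro y hy
    rw [mem_closedBall, pow_succ] at *
    linarith [(hτ y).2 x, dist_comm x (τ y x)]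
  have hscale (k : ℕ) : ε * (1 / 2) ^ (k + 1) / (1 / 2) = ε * (1 / 2) ^ k := by
    rw [pow_succ]; field_simp
  let N (k : ℕ) : ℕ∞ := packingNumber (ε * (1 / 2) ^ k) (closedBall x ((1 / 2) ^ k))
  have hN : Antitone N := antitone_nat_of_succ_le fun k => by
    simpa only [hscale] using packingNumber_le_of_antilipschitzWith
      (ε := ε * (1 / 2) ^ (k + 1)) hanti (by positivity) (hmaps k)
  obtain ⟨k₀, hk₀⟩ := WellFoundedLT.antitone_chain_condition hN
  refine ⟨k₀, fun k hk w hw => ?_⟩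
  have hfin : packingNumber (ε * (1 / 2) ^ k) (closedBall x ((1 / 2) ^ k)) ≠ ⊤ :=
    packingNumber_ne_top_of_isCompact (isCompact_closedBall _ _) (by positivity)
  have hcover := isCover_image_of_packingNumber_le (ε := ε * (1 / 2) ^ (k + 1)) hanti
    (by positivity) (hmaps k) (by rwa [hscale])
    (by rw [hscale]; exact ((hk₀ k hk).symm.trans (hk₀ (k + 1) (by lia))).le)
  rw [hscale, isCover_iff_subset_iUnion_closedBall] at hcover
  obtain ⟨_, ⟨y, -, rfl⟩, hy⟩ := mem_iUnion₂.1 (hcover (mem_closedBall.2 hw))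
  exact ⟨y, τ y, hτ y, by simpa [dist_comm] using hy⟩

lemma exists_isPointReflection_dist_le_mul [ProperSpace X] (hsym : PointSymmetric X) (x : X)
    {ε : ℝ} (hε : 0 < ε) :
    ∃ r > 0, ∀ w, dist x w ≤ r → ∃ y τ, IsPointReflection y τ ∧ dist (τ x) w ≤ ε * dist x w := by
  lift ε to ℝ≥0 using hε.le
  obtain ⟨k₀, hk₀⟩ := exists_isPointReflection_dist_le_pow hsym x (half_pos (NNReal.coe_pos.1 hε))
  refine ⟨(1 / 2) ^ (k₀ + 1), by positivity, fun w hw => ?_⟩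
  rcases eq_or_ne x w with rfl | hne
  · obtain ⟨τ, hτ⟩ := hsym x
    exact ⟨x, τ, hτ, by simp [hτ.1]⟩
  have hle : dist x w ≤ 1 := hw.trans (pow_le_one₀ (by norm_num) (by norm_num))
  obtain ⟨k, hlt, hk⟩ := exists_nat_pow_near_of_lt_one (dist_pos.2 hne) hle
    (y := 1 / 2) (by norm_num) (by norm_num)
  have hkk₀ : k₀ ≤ k := by
    by_contra! h
    have := pow_le_pow_of_le_one (by norm_num : (0 : ℝ) ≤ 1 / 2) (by norm_num)
      (show k + 1 ≤ k₀ + 1 by lia)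
    linarith
  obtain ⟨y, τ, hτ, hd⟩ := hk₀ k hkk₀ w (by rwa [dist_comm])
  refine ⟨y, τ, hτ, hd.trans ?_⟩
  rw [pow_succ] at hlt
  push_cast
  nlinarith

lemma dense_orbit_of_isPointReflection_mem [ProperSpace X] [PreconnectedSpace X]
    (hsym : PointSymmetric X) {H : Subgroup (X ≃ᵢ X)}
    (hH : ∀ y τ, IsPointReflection y τ → τ ∈ H) (x : X) : Dense ((fun g : X ≃ᵢ X => g x) '' H) := by
  set A := (fun g : X ≃ᵢ X => g x) '' H
  have hAne : A.Nonempty := ⟨x, 1, one_mem H, rfl⟩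
  obtain ⟨r, hr, hrefl⟩ := exists_isPointReflection_dist_le_mul hsym x (ε := 1 / 4) (by norm_num)
  have hgap (w : X) (hw : infDist w A < r) : infDist w A = 0 := by
    by_contra hne
    have hpos : 0 < infDist w A := lt_of_le_of_ne infDist_nonneg (Ne.symm hne)
    obtain ⟨_, ⟨g, hg, rfl⟩, hgw⟩ :=
      (infDist_lt_iff hAne).1 (lt_min hw (by linarith : infDist w A < 2 * infDist w A))
    obtain ⟨w, rfl⟩ := g.surjective w
    rw [g.dist_eq, dist_comm, lt_min_iff] at hgw
    obtain ⟨y, τ, hτ, hd⟩ := hrefl w hgw.1.le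
    have hmem : (g * τ) x ∈ A := ⟨g * τ, mul_mem hg (hH y τ hτ), rfl⟩
    have hle := infDist_le_dist_of_mem (x := g w) hmem
    rw [IsometryEquiv.mul_apply, g.dist_eq, dist_comm] at hle
    linarith
  have hclopen : IsClopen {w | infDist w A = 0} := by
    refine ⟨isClosed_eq (continuous_infDist_pt A) continuous_const, ?_⟩
    convert isOpen_lt (continuous_infDist_pt A) (continuous_const (y := r)) using 1
    exact Set.ext fun w => ⟨fun h : infDist w A = 0 => h.trans_lt hr, hgap w⟩
  have huniv := hclopen.eq_univ ⟨x, infDist_zero_of_mem ⟨1, one_mem H, rfl⟩⟩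
  exact fun w => (mem_closure_iff_infDist_zero hAne).2 (huniv.ge (mem_univ w))

lemma PointSymmetric.exists_isometryEquiv_apply_eq [ProperSpace X] [PreconnectedSpace X]
    (hsym : PointSymmetric X) (x y : X) : ∃ g : X ≃ᵢ X, g x = y := by
  have hdense := dense_orbit_of_isPointReflection_mem hsym (H := ⊤) (fun _ _ _ => trivial) x
  let K : Set (X ≃ᵢ X) := {g | dist (g x) x ≤ dist y x + 1}
  have hclosed : IsClosed ((fun g : X ≃ᵢ X => g x) '' K) :=
    ((isCompact_setOf_dist_isometryEquiv_le x _).image (continuous_isometryEquiv_eval x)).isClosed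
  have hmem : y ∈ closure ((fun g : X ≃ᵢ X => g x) '' K) := by
    refine Metric.mem_closure_iff.2 fun ε hε => ?_
    obtain ⟨_, ⟨g, -, rfl⟩, hg⟩ := Metric.mem_closure_iff.1 (hdense y) (min ε 1) (by positivity)
    refine ⟨g x, ⟨g, ?_, rfl⟩, hg.trans_le (min_le_left _ _)⟩
    exact (dist_triangle_left _ _ y).trans (by linarith [hg.trans_le (min_le_right ε 1)])
  obtain ⟨g, -, hg⟩ := hclosed.closure_eq.le hmem
  exact ⟨g, hg⟩

/-- Every pair of points at distance at most `r` has an approximate midpoint, at a distance of at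
most `3 / 4` of theirs from both. -/
def HasApproxMidpoints (X : Type*) [MetricSpace X] (r : ℝ) : Prop :=
  ∀ x w : X, dist x w ≤ r → ∃ y, dist x y ≤ 3 / 4 * dist x w ∧ dist y w ≤ 3 / 4 * dist x w

/-- The centre of a reflection taking `x` close to `w` is an approximate midpoint. -/
lemma PointSymmetric.exists_hasApproxMidpoints [ProperSpace X] [PreconnectedSpace X]
    (hsym : PointSymmetric X) : ∃ r > 0, HasApproxMidpoints X r := by
  rcases isEmpty_or_nonempty X with hX | ⟨⟨o⟩⟩
  · exact ⟨1, one_pos, fun x => hX.elim x⟩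
  obtain ⟨r, hr, hrefl⟩ := exists_isPointReflection_dist_le_mul hsym o (ε := 1 / 6) (by norm_num)
  refine ⟨r, hr, fun x w hxw => ?_⟩
  obtain ⟨g, rfl⟩ := hsym.exists_isometryEquiv_apply_eq o x
  obtain ⟨w, rfl⟩ := g.surjective w
  rw [g.dist_eq] at hxw ⊢
  obtain ⟨y, τ, hτ, hd⟩ := hrefl w hxw
  refine ⟨g y, ?_, ?_⟩ <;> rw [g.dist_eq]
  · linarith [hτ.2 o, dist_triangle_right o (τ o) w, dist_comm o y, dist_nonneg (x := o) (y := w)]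
  · linarith [hτ.2 o, dist_triangle_right o (τ o) w, dist_triangle y (τ o) w, hτ.dist_center o]

lemma HasApproxMidpoints.exists_mem_notMem_dist_le {r : ℝ} (hmid : HasApproxMidpoints X r)
    {Z : Set X} {x w : X} (hx : x ∈ Z) (hw : w ∉ Z) {t : ℝ} (htr : t ≤ r) (hxw : dist x w ≤ t)
    (n : ℕ) : ∃ p ∈ Z, ∃ q ∉ Z,
      dist p q ≤ (3 / 4) ^ n * t ∧ dist x p + 4 * ((3 / 4) ^ n * t) ≤ 4 * t := by
  have ht : 0 ≤ t := dist_nonneg.trans hxw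
  induction n with
  | zero => exact ⟨x, hx, w, hw, by simpa using hxw, by simp⟩
  | succ n ih =>
    obtain ⟨p, hp, q, hq, hpq, hxp⟩ := ih
    have hpos : 0 ≤ dist p q := dist_nonneg
    have hle : (3 / 4 : ℝ) ^ n * t ≤ t :=
      mul_le_of_le_one_left ht (pow_le_one₀ (by norm_num) (by norm_num))
    obtain ⟨y, hpy, hyq⟩ := hmid p q (by linarith)
    rw [show (3 / 4 : ℝ) ^ (n + 1) * t = 3 / 4 * ((3 / 4) ^ n * t) by rw [pow_succ]; ring]
    by_cases hy : y ∈ Z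
    · exact ⟨y, hy, q, hq, by linarith, by linarith [dist_triangle x p y, hpos]⟩
    · exact ⟨p, hp, y, hy, by linarith, by linarith [hpos]⟩

lemma HasApproxMidpoints.mem_connectedComponentIn_closedBall [ProperSpace X] {r : ℝ}
    (hmid : HasApproxMidpoints X r) {x w : X} {t : ℝ} (ht : 0 < t) (htr : t ≤ r)
    (hxw : dist x w ≤ t) : w ∈ connectedComponentIn (closedBall x (4 * t)) x := by
  by_contra hcon
  set K := closedBall x (4 * t)
  have hxK : x ∈ K := mem_closedBall_self (by positivity)
  have hwK : w ∈ K := by rw [mem_closedBall, dist_comm]; linarith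
  have : CompactSpace K := isCompact_iff_compactSpace.1 (isCompact_closedBall x (4 * t))
  obtain ⟨Z, hZ, hxZ, hwZ⟩ : ∃ Z : Set K, IsClopen Z ∧ ⟨x, hxK⟩ ∈ Z ∧ ⟨w, hwK⟩ ∉ Z := by
    rw [connectedComponentIn_eq_image hxK] at hcon
    have hnot : (⟨w, hwK⟩ : K) ∉ connectedComponent ⟨x, hxK⟩ := fun hm => hcon ⟨_, hm, rfl⟩
    simpa [connectedComponent_eq_iInter_isClopen] using hnot
  obtain ⟨δ, hδ, hsep⟩ := hZ.1.isCompact.exists_thickening_subset_open hZ.2 subset_rfl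
  obtain ⟨n, hn⟩ := exists_pow_lt_of_lt_one (div_pos hδ ht) (by norm_num : (3 / 4 : ℝ) < 1)
  obtain ⟨_, ⟨p, hp, rfl⟩, q, hq, hpq, hxp⟩ := hmid.exists_mem_notMem_dist_le
    (Z := Subtype.val '' Z) ⟨_, hxZ, rfl⟩ (by simpa using fun _ => hwZ) htr hxw n
  have hqK : q ∈ K := by
    rw [mem_closedBall']
    linarith [dist_triangle x p q, dist_nonneg (x := (p : X)) (y := q)]
  refine hq ⟨⟨q, hqK⟩, hsep (mem_thickening_iff.2 ⟨p, hp, ?_⟩), rfl⟩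
  rw [dist_comm]
  exact hpq.trans_lt ((lt_div_iff₀ ht).1 hn)

lemma PointSymmetric.locallyConnectedSpace [ProperSpace X] [PreconnectedSpace X]
    (hsym : PointSymmetric X) : LocallyConnectedSpace X := by
  obtain ⟨r, hr, hmid⟩ := hsym.exists_hasApproxMidpoints
  refine locallyConnectedSpace_iff_connectedComponentIn_open.2 fun F hF x _ =>
    Metric.isOpen_iff.2 fun y hy => ?_
  obtain ⟨ε, hε, hball⟩ := Metric.isOpen_iff.1 hF y (connectedComponentIn_subset _ _ hy)
  have ht : 0 < min r (ε / 5) := by positivity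
  refine ⟨_, ht, fun w hw => ?_⟩
  have hsub : closedBall y (4 * min r (ε / 5)) ⊆ F :=
    (closedBall_subset_ball (by linarith [min_le_right r (ε / 5)])).trans hball
  rw [connectedComponentIn_eq hy]
  exact connectedComponentIn_mono y hsub
    (hmid.mem_connectedComponentIn_closedBall ht (min_le_left _ _) (mem_ball'.1 hw).le)

end Homogeneous

section Unimodular

variable {X : Type*} [MetricSpace X]

lemma map_eq_one_of_forall_zpow_le {G : Type*} [Group G] (φ : G →* ℝ≥0) {g : G} {C : ℝ≥0}
    (hC : ∀ n : ℤ, φ (g ^ n) ≤ C) : φ g = 1 := by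
  have hle {h : G} (hh : ∀ n : ℕ, φ (h ^ n) ≤ C) : φ h ≤ 1 := by
    by_contra! hlt
    obtain ⟨n, hn⟩ := pow_unbounded_of_one_lt C hlt
    exact (hh n).not_gt (by rwa [map_pow])
  have hg : φ g ≤ 1 := hle fun n => mod_cast hC n
  have hinv : φ g⁻¹ ≤ 1 := hle fun n => by simpa using hC (-n)
  refine hg.antisymm ?_
  calc (1 : ℝ≥0) = φ g * φ g⁻¹ := by rw [← map_mul, mul_inv_cancel, map_one]
    _ ≤ φ g := mul_le_of_le_one_right' hinv

lemma exists_forall_modularCharacter_le [ProperSpace X] (o : X) (r : ℝ) :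
    ∃ C : ℝ≥0, ∀ g : X ≃ᵢ X, dist (g o) o ≤ r → Measure.modularCharacter g ≤ C := by
  let m : Measure (X ≃ᵢ X) := Measure.haar
  let K (s : ℝ) : Set (X ≃ᵢ X) := {g | dist (g o) o ≤ s}
  have hK (s : ℝ) : IsCompact (K s) := isCompact_setOf_dist_isometryEquiv_le o s
  have hpos : m (K 1) ≠ 0 := by
    refine ((isOpen_setOf_dist_isometryEquiv_lt o o 1).measure_pos m ⟨1, by simp⟩).trans_le
      (measure_mono fun g (hg : dist (g o) o < 1) => hg.le) |>.ne'
  have hratio : m (K (1 + r)) / m (K 1) ≠ ⊤ := ENNReal.div_ne_top (hK _).measure_lt_top.ne hpos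
  refine ⟨(m (K (1 + r)) / m (K 1)).toNNReal, fun g hg => ?_⟩
  rw [← ENNReal.coe_le_coe, ENNReal.coe_toNNReal hratio, ENNReal.le_div_iff_mul_le (.inl hpos)
    (.inl (hK 1).measure_lt_top.ne)]
  calc (Measure.modularCharacter g : ℝ≥0∞) * m (K 1) = m.map (· * g) (K 1) := by
        rw [Measure.map_right_mul_eq_modularCharacterFun_smul]; rfl
    _ = m ((· * g) ⁻¹' K 1) := Measure.map_apply (measurable_mul_const g) (hK 1).measurableSet
    _ ≤ m (K (1 + r)) := measure_mono fun h (hh : dist (h (g o)) o ≤ 1) => by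
        change dist (h o) o ≤ 1 + r
        linarith [dist_triangle (h o) (h (g o)) o, h.dist_eq o (g o), dist_comm o (g o)]

lemma modularCharacter_eq_one_of_apply_eq [ProperSpace X] {g : X ≃ᵢ X} {y : X} (hg : g y = y) :
    Measure.modularCharacter g = 1 := by
  obtain ⟨C, hC⟩ := exists_forall_modularCharacter_le y 0
  let stab : Subgroup (X ≃ᵢ X) :=
    { carrier := {h | h y = y}
      mul_mem' := fun {a b} (ha : a y = y) (hb : b y = y) => by
        rw [mem_ofPred_eq, IsometryEquiv.mul_apply, hb, ha]
      one_mem' := rfl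
      inv_mem' := fun {a} (ha : a y = y) => by
        rw [mem_ofPred_eq, ← dist_eq_zero, dist_inv_apply_left, ha, dist_self] }
  refine map_eq_one_of_forall_zpow_le _ (C := C) fun n => hC _ ?_
  have hfix : (g ^ n) y = y := stab.zpow_mem hg n
  rw [hfix, dist_self]

/-- The modular character is trivial on the reflections, whose group has dense orbits, and therefore
bounded. -/
lemma PointSymmetric.modularCharacter_eq_one [ProperSpace X] [PreconnectedSpace X] [Nonempty X]
    (hsym : PointSymmetric X) (g : X ≃ᵢ X) : Measure.modularCharacter g = 1 := by
  obtain ⟨o⟩ := ‹Nonempty X›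
  obtain ⟨C, hC⟩ := exists_forall_modularCharacter_le o 1
  have hdense := dense_orbit_of_isPointReflection_mem hsym
    (H := (Measure.modularCharacter : (X ≃ᵢ X) →* ℝ≥0).ker)
    (fun _ _ hτ => modularCharacter_eq_one_of_apply_eq hτ.1) o
  have hbound (g : X ≃ᵢ X) : Measure.modularCharacter g ≤ C := by
    obtain ⟨_, ⟨s, hs, rfl⟩, hd⟩ := Metric.mem_closure_iff.1 (hdense (g o)) 1 one_pos
    rw [← mul_inv_cancel_left s g, map_mul, MonoidHom.mem_ker.1 hs, one_mul]
    refine hC _ ?_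
    rw [IsometryEquiv.mul_apply, dist_inv_apply_left]
    exact hd.le
  exact map_eq_one_of_forall_zpow_le _ fun n => hbound (g ^ n)

lemma PointSymmetric.isMulRightInvariant_haar [ProperSpace X] [PreconnectedSpace X] [Nonempty X]
    (hsym : PointSymmetric X) : (Measure.haar : Measure (X ≃ᵢ X)).IsMulRightInvariant where
  map_mul_right_eq_self g := by
    rw [Measure.map_right_mul_eq_modularCharacterFun_smul]
    exact (congrArg (· • Measure.haar) (hsym.modularCharacter_eq_one g)).trans (one_smul ..)

end Unimodular

/-! ### Void events -/

section Separation

variable {X : Type*} [TopologicalSpace X]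

lemma exists_countableBasis_pairwise_disjoint [T2Space X] [SecondCountableTopology X] {n : ℕ}
    {g : Fin n → X} (hg : Injective g) :
    ∃ f : Fin n → TopologicalSpace.countableBasis X,
      (Pairwise fun i j => Disjoint (f i).1 (f j).1) ∧ ∀ i, g i ∈ (f i).1 := by
  obtain ⟨U, hU, hdisj⟩ := (finite_range g).t2_separation
  have hbasis (i : Fin n) :
      ∃ v ∈ TopologicalSpace.countableBasis X, g i ∈ v ∧ v ⊆ U (g i) :=
    (TopologicalSpace.isBasis_countableBasis X).exists_subset_of_mem_open (hU _).1 (hU _).2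
  choose v hv hgv hvU using hbasis
  refine ⟨fun i => ⟨v i, hv i⟩, fun i j hij => ?_, hgv⟩
  exact (hdisj (mem_range_self i) (mem_range_self j) (hg.ne hij)).mono (hvU i) (hvU j)

lemma natCast_le_encard_iff_exists_countableBasis [T2Space X] [SecondCountableTopology X]
    (n : ℕ) (A : Set X) :
    (n : ℕ∞) ≤ A.encard ↔ ∃ f : Fin n → TopologicalSpace.countableBasis X,
      (Pairwise fun i j => Disjoint (f i).1 (f j).1) ∧ ∀ i, ¬Disjoint A (f i).1 := by
  constructor
  · intro h
    obtain ⟨t, htA, htn⟩ := exists_subset_encard_eq h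
    have hfin : t.Finite := finite_of_encard_eq_coe htn
    have hcard : Nat.card t = n := by
      rw [Nat.card_coe_set_eq, ncard_def, htn, ENat.toNat_natCast]
    have := hfin.to_subtype
    let e := Finite.equivFinOfCardEq hcard
    obtain ⟨f, hdisj, hf⟩ := exists_countableBasis_pairwise_disjoint
      (Subtype.val_injective.comp e.symm.injective)
    exact ⟨f, hdisj, fun i => not_disjoint_iff.2 ⟨_, htA (e.symm i).2, hf i⟩⟩
  · rintro ⟨f, hdisj, hmeet⟩
    choose g hgA hgf using fun i => not_disjoint_iff.1 (hmeet i)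
    have hg : Injective g := fun i j hij => by
      by_contra hne
      exact disjoint_left.1 (hdisj hne) (hgf i) (hij ▸ hgf j)
    calc (n : ℕ∞) = ENat.card (Fin n) := by simp
      _ ≤ (range g).encard := hg.encard_range
      _ ≤ A.encard := encard_le_encard (range_subset_iff.2 hgA)

end Separation

section VoidEvents

variable {X : Type*} [MetricSpace X]

/-- The event that the configuration has no point in `B`. -/
def voidEvent (B : Set X) : Set (Config X) := {s | Disjoint s.1 B}

/-- The void events of measurable sets, a π-system generating the σ-algebra of `Config X`. -/
def voidEvents (X : Type*) [MetricSpace X] [MeasurableSpace X] : Set (Set (Config X)) :=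
  {A | ∃ B : Set X, MeasurableSet B ∧ A = voidEvent B}

lemma voidEvent_empty : voidEvent (∅ : Set X) = univ :=
  eq_univ_of_forall fun s => disjoint_empty s.1

lemma voidEvent_union (A B : Set X) : voidEvent (A ∪ B) = voidEvent A ∩ voidEvent B :=
  ext fun _ => disjoint_union_right

lemma voidEvent_eq_setOf_encard (B : Set X) :
    voidEvent B = {s : Config X | (s.1 ∩ B).encard = 0} := by
  ext s
  rw [mem_ofPred_eq, encard_eq_zero, ← disjoint_iff_inter_eq_empty]
  rfl

lemma setOf_natCast_le_encard_eq [SecondCountableTopology X] (n : ℕ) (B : Set X) :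
    {s : Config X | (n : ℕ∞) ≤ (s.1 ∩ B).encard} =
      ⋃ (f : Fin n → TopologicalSpace.countableBasis X)
        (_ : Pairwise fun i j => Disjoint (f i).1 (f j).1), ⋂ i, (voidEvent (B ∩ (f i).1))ᶜ := by
  ext s
  simp only [natCast_le_encard_iff_exists_countableBasis, mem_ofPred_eq, mem_iUnion, mem_iInter,
    exists_prop, mem_compl_iff, voidEvent, not_disjoint_iff, mem_inter_iff, and_assoc]

lemma measurableSet_setOf_encard_eq_of_le {α β : Type*} {m : MeasurableSpace α} {S : α → Set β}
    (h : ∀ n : ℕ, MeasurableSet {a | (n : ℕ∞) ≤ (S a).encard}) (n : ℕ∞) :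
    MeasurableSet {a | (S a).encard = n} := by
  induction n using ENat.recTopCoe with
  | top =>
    simp only [ENat.eq_top_iff_forall_ge, ofPred_forall]
    exact MeasurableSet.iInter h
  | coe n =>
    have hdiff : {a | (S a).encard = n} =
        {a | (n : ℕ∞) ≤ (S a).encard} \ {a | ((n + 1 : ℕ) : ℕ∞) ≤ (S a).encard} := by
      ext a
      rw [mem_sdiff, mem_ofPred_eq, mem_ofPred_eq, mem_ofPred_eq, not_le, Nat.cast_add,
        Nat.cast_one, ENat.lt_add_one_iff (ENat.natCast_ne_top n), and_comm, le_antisymm_iff]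
    exact hdiff ▸ (h n).diff (h (n + 1))

variable [MeasurableSpace X]

lemma measurableSet_voidEvent {B : Set X} (hB : MeasurableSet B) : MeasurableSet (voidEvent B) :=
  MeasurableSpace.measurableSet_generateFrom ⟨B, 0, hB, voidEvent_eq_setOf_encard B⟩

lemma isPiSystem_voidEvents : IsPiSystem (voidEvents X) := by
  rintro _ ⟨A, hA, rfl⟩ _ ⟨B, hB, rfl⟩ -
  exact ⟨A ∪ B, hA.union hB, (voidEvent_union A B).symm⟩

lemma univ_mem_voidEvents : univ ∈ voidEvents X :=
  ⟨∅, MeasurableSet.empty, voidEvent_empty.symm⟩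

variable [SecondCountableTopology X] [BorelSpace X]

lemma generateFrom_voidEvents :
    MeasurableSpace.generateFrom (voidEvents X) = Config.instMeasurableSpace := by
  refine le_antisymm (MeasurableSpace.generateFrom_le ?_) (MeasurableSpace.generateFrom_le ?_)
  · rintro _ ⟨B, hB, rfl⟩
    exact measurableSet_voidEvent hB
  rintro _ ⟨B, n, hB, rfl⟩
  refine measurableSet_setOf_encard_eq_of_le (m := .generateFrom (voidEvents X)) (fun n => ?_) n
  have := (TopologicalSpace.countable_countableBasis X).to_subtype
  have hvoid (v : TopologicalSpace.countableBasis X) :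
      MeasurableSet[.generateFrom (voidEvents X)] (voidEvent (B ∩ v.1)) :=
    MeasurableSpace.measurableSet_generateFrom
      ⟨_, hB.inter (TopologicalSpace.isOpen_of_mem_countableBasis v.2).measurableSet, rfl⟩
  rw [setOf_natCast_le_encard_eq]
  exact MeasurableSet.iUnion fun f => MeasurableSet.iUnion fun _ => MeasurableSet.iInter
    fun i => (hvoid (f i)).compl

lemma measurable_config_of_preimage_voidEvent {α : Type*} [MeasurableSpace α] {f : α → Config X}
    (hf : ∀ B : Set X, MeasurableSet B → MeasurableSet (f ⁻¹' voidEvent B)) : Measurable f := by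
  rw [← generateFrom_voidEvents]
  refine measurable_generateFrom ?_
  rintro _ ⟨B, hB, rfl⟩
  exact hf B hB

lemma measure_config_ext {P P' : Measure (Config X)} [IsProbabilityMeasure P]
    [IsProbabilityMeasure P']
    (h : ∀ B : Set X, MeasurableSet B → P (voidEvent B) = P' (voidEvent B)) : P = P' := by
  refine ext_of_generate_finite _ generateFrom_voidEvents.symm isPiSystem_voidEvents ?_ (by simp)
  rintro _ ⟨B, hB, rfl⟩
  exact h B hB

lemma measure_config_prod_eq {P P' : Measure (Config X)} [IsProbabilityMeasure P]
    [IsProbabilityMeasure P'] {L : Measure (Config X × Config X)}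
    (h : ∀ A B : Set X, MeasurableSet A → MeasurableSet B →
      L (voidEvent A ×ˢ voidEvent B) = P (voidEvent A) * P' (voidEvent B)) : P.prod P' = L := by
  let spanning (Q : Measure (Config X)) [IsProbabilityMeasure Q] :
      Q.FiniteSpanningSetsIn (voidEvents X) :=
    ⟨fun _ => univ, fun _ => univ_mem_voidEvents, fun _ => by simp, iUnion_const _⟩
  refine Measure.prod_eq_generateFrom generateFrom_voidEvents generateFrom_voidEvents
    isPiSystem_voidEvents isPiSystem_voidEvents (spanning P) (spanning P') ?_
  rintro _ ⟨A, hA, rfl⟩ _ ⟨B, hB, rfl⟩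
  exact h A B hA hB

end VoidEvents

section Operations

variable {X : Type*} [MetricSpace X]

namespace Config

instance : EmptyCollection (Config X) := ⟨∅, fun K _ => by simp⟩

/-- Superposition of configurations. -/
instance : Union (Config X) :=
  ⟨fun s t => ⟨s.1 ∪ t.1, fun K hK => by
    rw [union_inter_distrib_right]
    exact (s.2 K hK).union (t.2 K hK)⟩⟩

/-- The restriction `ω|_D` of a configuration to `D`. -/
def inter (D : Set X) (s : Config X) : Config X :=
  ⟨s.1 ∩ D, fun K hK => (s.2 K hK).subset fun _ hz => ⟨hz.1.1, hz.2⟩⟩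

/-- The configuration that agrees with `ω i` on the `i`-th set of a locally finite family `A`. -/
def glue {ι : Type*} (A : ι → Set X)
    (hA : ∀ K : Set X, IsBounded K → {i | ¬Disjoint (A i) K}.Finite) (ω : ι → Config X) :
    Config X :=
  ⟨⋃ i, (ω i).1 ∩ A i, fun K hK => by
    refine ((hA K hK).biUnion fun i _ => (ω i).2 K hK).subset ?_
    rintro x ⟨hx, hxK⟩
    obtain ⟨i, hxω, hxA⟩ := mem_iUnion.1 hx
    exact mem_biUnion (not_disjoint_iff.2 ⟨x, hxA, hxK⟩) ⟨hxω, hxK⟩⟩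

end Config

lemma preimage_union_voidEvent (B : Set X) :
    (fun p : Config X × Config X => p.1 ∪ p.2) ⁻¹' voidEvent B = voidEvent B ×ˢ voidEvent B :=
  ext fun _ => disjoint_union_left

lemma preimage_inter_voidEvent (B D : Set X) :
    Config.inter D ⁻¹' voidEvent B = voidEvent (B ∩ D) := by
  ext s
  change Disjoint (s.1 ∩ D) B ↔ Disjoint s.1 (B ∩ D)
  rw [disjoint_iff_inter_eq_empty, disjoint_iff_inter_eq_empty, inter_assoc, inter_comm D]

lemma preimage_insertPt_voidEvent (B : Set X) :
    (fun p : X × Config X => Config.insertPt p.1 p.2) ⁻¹' voidEvent B = Bᶜ ×ˢ voidEvent B :=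
  ext fun _ => disjoint_insert_left

lemma preimage_glue_voidEvent {ι : Type*} (A : ι → Set X)
    (hA : ∀ K : Set X, IsBounded K → {i | ¬Disjoint (A i) K}.Finite) (B : Set X) :
    Config.glue A hA ⁻¹' voidEvent B = univ.pi fun i => voidEvent (B ∩ A i) := by
  simp_rw [← preimage_inter_voidEvent]
  ext ω
  exact disjoint_iUnion_left.trans (by simp only [mem_univ_pi]; rfl)

lemma preimage_mapIso_voidEvent (γ : X ≃ᵢ X) (B : Set X) :
    Config.mapIso γ ⁻¹' voidEvent B = voidEvent (γ ⁻¹' B) :=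
  ext fun _ => disjoint_image_left

variable [MeasurableSpace X] [SecondCountableTopology X] [BorelSpace X]

lemma measurable_config_union : Measurable fun p : Config X × Config X => p.1 ∪ p.2 :=
  measurable_config_of_preimage_voidEvent fun B hB => by
    rw [preimage_union_voidEvent]
    exact (measurableSet_voidEvent hB).prod (measurableSet_voidEvent hB)

lemma measurable_config_inter {D : Set X} (hD : MeasurableSet D) : Measurable (Config.inter D) :=
  measurable_config_of_preimage_voidEvent fun B hB => by
    rw [preimage_inter_voidEvent]
    exact measurableSet_voidEvent (hB.inter hD)

lemma measurable_config_insertPt : Measurable fun p : X × Config X => Config.insertPt p.1 p.2 :=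
  measurable_config_of_preimage_voidEvent fun B hB => by
    rw [preimage_insertPt_voidEvent]
    exact hB.compl.prod (measurableSet_voidEvent hB)

lemma measurable_config_glue {ι : Type*} [Countable ι] {A : ι → Set X}
    (hA : ∀ K : Set X, IsBounded K → {i | ¬Disjoint (A i) K}.Finite)
    (hAm : ∀ i, MeasurableSet (A i)) : Measurable (Config.glue A hA) :=
  measurable_config_of_preimage_voidEvent fun B hB => by
    rw [preimage_glue_voidEvent]
    exact MeasurableSet.univ_pi fun i => measurableSet_voidEvent (hB.inter (hAm i))

lemma measurable_mapIso (γ : X ≃ᵢ X) : Measurable (Config.mapIso γ) :=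
  measurable_config_of_preimage_voidEvent fun B hB => by
    rw [preimage_mapIso_voidEvent]
    exact measurableSet_voidEvent (γ.continuous.measurable hB)

end Operations

/-! ### Poisson processes through their void probabilities -/

section ExpNeg

/-- `exp (-x)` for `x ∈ [0, ∞]`, with the convention `exp (-∞) = 0`. -/
def expNeg (x : ℝ≥0∞) : ℝ≥0∞ := EReal.exp (-x)

lemma expNeg_zero : expNeg 0 = 1 := by simp [expNeg]

lemma expNeg_top : expNeg ⊤ = 0 := by simp [expNeg]

lemma expNeg_of_ne_top {x : ℝ≥0∞} (hx : x ≠ ⊤) :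
    expNeg x = ENNReal.ofReal (Real.exp (-x.toReal)) := by
  lift x to ℝ≥0 using hx
  rfl

lemma expNeg_ne_zero {x : ℝ≥0∞} (hx : x ≠ ⊤) : expNeg x ≠ 0 := by
  simpa [expNeg] using hx

lemma expNeg_add (x y : ℝ≥0∞) : expNeg (x + y) = expNeg x * expNeg y := by
  rw [expNeg, expNeg, expNeg, EReal.coe_ennreal_add, EReal.neg_add, ← EReal.exp_add, sub_eq_add_neg]
  · exact .inl (EReal.coe_ennreal_ne_bot x)
  · exact .inr (EReal.coe_ennreal_ne_bot y)

lemma continuous_expNeg : Continuous expNeg :=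
  ENNReal.continuous_exp.comp (continuous_neg.comp continuous_coe_ennreal_ereal)

lemma expNeg_sum {ι : Type*} (s : Finset ι) (x : ι → ℝ≥0∞) :
    expNeg (∑ i ∈ s, x i) = ∏ i ∈ s, expNeg (x i) := by
  classical
  induction s using Finset.induction_on with
  | empty => simp [expNeg_zero]
  | insert i s hi ih => rw [Finset.sum_insert hi, Finset.prod_insert hi, expNeg_add, ih]

lemma hasProd_expNeg {ι : Type*} (x : ι → ℝ≥0∞) :
    HasProd (fun i => expNeg (x i)) (expNeg (∑' i, x i)) := by
  simpa only [HasProd, Function.comp_def, expNeg_sum] using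
    (continuous_expNeg.tendsto _).comp (ENNReal.summable (f := x)).hasSum

lemma expNeg_mul_tsum_pow_div_factorial {x : ℝ≥0∞} (hx : x ≠ ⊤) :
    expNeg x * ∑' n : ℕ, x ^ n / n.factorial = 1 := by
  lift x to ℝ≥0 using hx
  have hterm (n : ℕ) : (x : ℝ≥0∞) ^ n / n.factorial = ENNReal.ofReal (x ^ n / n.factorial) := by
    rw [ENNReal.ofReal_div_of_pos (by positivity), ENNReal.ofReal_pow x.coe_nonneg,
      ENNReal.ofReal_coe_nnreal, ENNReal.ofReal_natCast]
  have hsum : HasSum (fun n : ℕ => (x : ℝ) ^ n / n.factorial) (Real.exp x) := by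
    rw [Real.exp_eq_exp_ℝ]
    exact NormedSpace.expSeries_div_hasSum_exp _
  rw [tsum_congr hterm, ← ENNReal.ofReal_tsum_of_nonneg (fun n => by positivity) hsum.summable,
    hsum.tsum_eq, expNeg_of_ne_top ENNReal.coe_ne_top, ← ENNReal.ofReal_mul (Real.exp_pos _).le,
    ENNReal.coe_toReal, ← Real.exp_add, neg_add_cancel, Real.exp_zero, ENNReal.ofReal_one]

end ExpNeg

section Poisson

variable {X : Type*} [MetricSpace X] [MeasurableSpace X]

/-- `P` is a probability measure whose void probabilities are those of a Poisson process of
intensity `ν`. By Rényi's theorem this characterises the law of the process, and unlike the joint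
law of counts it is stable under superposition and restriction for immediate reasons. -/
structure HasPoissonVoids (ν : Measure X) (P : Measure (Config X)) : Prop where
  isProbabilityMeasure : IsProbabilityMeasure P
  measure_voidEvent : ∀ B : Set X, MeasurableSet B → P (voidEvent B) = expNeg (ν B)

lemma IsPoisson.hasPoissonVoids {ν : Measure X} {P : Measure (Config X)} (h : IsPoisson ν P) :
    HasPoissonVoids ν P := by
  obtain ⟨hprob, hcount, hinf, -⟩ := h
  refine ⟨hprob, fun B hB => ?_⟩
  rcases eq_or_ne (ν B) ⊤ with htop | htop
  · rw [htop, expNeg_top, ← prob_compl_eq_one_iff (measurableSet_voidEvent hB)]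
    refine le_antisymm prob_le_one ((hinf B hB htop).symm.trans_le (measure_mono ?_))
    exact fun s hs hdisj => hs (disjoint_iff_inter_eq_empty.1 hdisj ▸ finite_empty)
  · rw [voidEvent_eq_setOf_encard, expNeg_of_ne_top htop]
    simpa [Config.count] using hcount B hB htop.lt_top 0

/-- The (unnormalised) law of `n` independent points with common distribution `ρ`, coinciding points
being merged. -/
def iidConfig (ρ : Measure X) : ℕ → Measure (Config X)
  | 0 => Measure.dirac ∅
  | n + 1 => (ρ.prod (iidConfig ρ n)).map fun p => Config.insertPt p.1 p.2

/-- The Poisson process of finite intensity `ρ`: a Poisson number of independent points. -/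
def finitePoisson (ρ : Measure X) : Measure (Config X) :=
  Measure.sum fun n : ℕ => (expNeg (ρ univ) / n.factorial) • iidConfig ρ n

instance isFiniteMeasure_iidConfig (ρ : Measure X) [IsFiniteMeasure ρ] (n : ℕ) :
    IsFiniteMeasure (iidConfig ρ n) := by
  induction n with
  | zero => exact inferInstanceAs (IsFiniteMeasure (Measure.dirac _))
  | succ n ih => exact inferInstanceAs (IsFiniteMeasure (Measure.map _ _))

variable [SecondCountableTopology X] [BorelSpace X] {ν ν' : Measure X} {P P' : Measure (Config X)}

lemma iidConfig_voidEvent (ρ : Measure X) [IsFiniteMeasure ρ] {B : Set X} (hB : MeasurableSet B)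
    (n : ℕ) : iidConfig ρ n (voidEvent B) = ρ Bᶜ ^ n := by
  induction n with
  | zero =>
    rw [iidConfig, Measure.dirac_apply_of_mem (empty_disjoint B), pow_zero]
  | succ n ih =>
    rw [iidConfig, Measure.map_apply measurable_config_insertPt (measurableSet_voidEvent hB),
      preimage_insertPt_voidEvent, Measure.prod_prod, ih, pow_succ']

lemma finitePoisson_voidEvent (ρ : Measure X) [IsFiniteMeasure ρ] {B : Set X}
    (hB : MeasurableSet B) : finitePoisson ρ (voidEvent B) = expNeg (ρ B) := by
  have hterm (n : ℕ) : ((expNeg (ρ univ) / n.factorial) • iidConfig ρ n) (voidEvent B) =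
      expNeg (ρ B) * (expNeg (ρ Bᶜ) * (ρ Bᶜ ^ n / n.factorial)) := by
    rw [Measure.smul_apply, iidConfig_voidEvent ρ hB, smul_eq_mul, ← measure_add_measure_compl hB,
      expNeg_add]
    simp only [div_eq_mul_inv]
    ring
  rw [finitePoisson, Measure.sum_apply _ (measurableSet_voidEvent hB), tsum_congr hterm,
    ENNReal.tsum_mul_left, ENNReal.tsum_mul_left,
    expNeg_mul_tsum_pow_div_factorial (measure_ne_top ρ _), mul_one]

lemma hasPoissonVoids_finitePoisson (ρ : Measure X) [IsFiniteMeasure ρ] :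
    HasPoissonVoids ρ (finitePoisson ρ) := by
  refine ⟨⟨?_⟩, fun B hB => finitePoisson_voidEvent ρ hB⟩
  rw [← voidEvent_empty, finitePoisson_voidEvent ρ MeasurableSet.empty, measure_empty, expNeg_zero]

lemma iidConfig_absolutelyContinuous {ρ ρ' : Measure X} [IsFiniteMeasure ρ] [IsFiniteMeasure ρ']
    (h : ρ ≪ ρ') (n : ℕ) : iidConfig ρ n ≪ iidConfig ρ' n := by
  induction n with
  | zero => exact .rfl
  | succ n ih => exact (h.prod ih).map measurable_config_insertPt

lemma finitePoisson_absolutelyContinuous {ρ ρ' : Measure X} [IsFiniteMeasure ρ]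
    [IsFiniteMeasure ρ'] (h : ρ ≪ ρ') : finitePoisson ρ ≪ finitePoisson ρ' := by
  refine .mk fun E hE hE0 => ?_
  rw [finitePoisson, Measure.sum_apply _ hE, ENNReal.tsum_eq_zero] at hE0 ⊢
  intro n
  have hweight : expNeg (ρ' univ) / n.factorial ≠ 0 :=
    ENNReal.div_ne_zero.2 ⟨expNeg_ne_zero (measure_ne_top ρ' _), ENNReal.natCast_ne_top _⟩
  have hnull : iidConfig ρ' n E = 0 := (mul_eq_zero.1 (hE0 n)).resolve_left hweight
  exact mul_eq_zero_of_right _ (iidConfig_absolutelyContinuous h n hnull)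

namespace HasPoissonVoids

lemma unique (h : HasPoissonVoids ν P) (h' : HasPoissonVoids ν P') : P = P' := by
  have := h.isProbabilityMeasure
  have := h'.isProbabilityMeasure
  exact measure_config_ext fun B hB => by
    rw [h.measure_voidEvent B hB, h'.measure_voidEvent B hB]

lemma map_union (h : HasPoissonVoids ν P) (h' : HasPoissonVoids ν' P') :
    HasPoissonVoids (ν + ν')
      ((P.prod P').map fun p : Config X × Config X => p.1 ∪ p.2) := by
  have := h.isProbabilityMeasure
  have := h'.isProbabilityMeasure
  refine ⟨Measure.isProbabilityMeasure_map measurable_config_union.aemeasurable, fun B hB => ?_⟩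
  rw [Measure.map_apply measurable_config_union (measurableSet_voidEvent hB),
    preimage_union_voidEvent, Measure.prod_prod, h.measure_voidEvent B hB,
    h'.measure_voidEvent B hB, Measure.add_apply, expNeg_add]

lemma map_inter (h : HasPoissonVoids ν P) {D : Set X} (hD : MeasurableSet D) :
    HasPoissonVoids (ν.restrict D) (P.map (Config.inter D)) := by
  have := h.isProbabilityMeasure
  refine ⟨Measure.isProbabilityMeasure_map (measurable_config_inter hD).aemeasurable,
    fun B hB => ?_⟩
  rw [Measure.map_apply (measurable_config_inter hD) (measurableSet_voidEvent hB),
    preimage_inter_voidEvent, h.measure_voidEvent _ (hB.inter hD), Measure.restrict_apply hB]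

lemma map_mapIso (h : HasPoissonVoids ν P) (γ : X ≃ᵢ X) :
    HasPoissonVoids (ν.map γ) (P.map (Config.mapIso γ)) := by
  have := h.isProbabilityMeasure
  have hγ := γ.continuous.measurable
  refine ⟨Measure.isProbabilityMeasure_map (measurable_mapIso γ).aemeasurable, fun B hB => ?_⟩
  rw [Measure.map_apply (measurable_mapIso γ) (measurableSet_voidEvent hB),
    preimage_mapIso_voidEvent, h.measure_voidEvent _ (hγ hB), Measure.map_apply hγ hB]

lemma map_glue {ι : Type*} [Countable ι] {A : ι → Set X}
    (hA : ∀ K : Set X, IsBounded K → {i | ¬Disjoint (A i) K}.Finite)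
    (hAm : ∀ i, MeasurableSet (A i)) (hdisj : Pairwise (Disjoint on A)) (hcover : ⋃ i, A i = univ)
    {Q : ι → Measure (Config X)} [∀ i, IsProbabilityMeasure (Q i)]
    (hQ : ∀ i, HasPoissonVoids (ν.restrict (A i)) (Q i)) :
    HasPoissonVoids ν ((Measure.infinitePi Q).map (Config.glue A hA)) := by
  have hglue := measurable_config_glue hA hAm
  refine ⟨Measure.isProbabilityMeasure_map hglue.aemeasurable, fun B hB => ?_⟩
  have hterm (i : ι) : Q i (voidEvent (B ∩ A i)) = expNeg (ν (B ∩ A i)) := by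
    rw [(hQ i).measure_voidEvent _ (hB.inter (hAm i)), Measure.restrict_apply (hB.inter (hAm i)),
      inter_assoc, inter_self]
  rw [Measure.map_apply hglue (measurableSet_voidEvent hB), preimage_glue_voidEvent,
    Measure.infinitePi_pi_univ _ fun i => measurableSet_voidEvent (hB.inter (hAm i)),
    tprod_congr hterm, (hasProd_expNeg _).tprod_eq,
    ← measure_iUnion (fun i j hij => (hdisj hij).mono inter_subset_right inter_subset_right)
      fun i => hB.inter (hAm i), ← inter_iUnion, hcover, inter_univ]

/-- Both laws are superpositions of the same process outside `D` with a finite Poisson process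
inside `D`. -/
lemma absolutelyContinuous (h : HasPoissonVoids ν P) (h' : HasPoissonVoids ν' P') (hac : ν ≪ ν')
    {D : Set X} (hD : MeasurableSet D) (hνD : ν D ≠ ⊤) (hν'D : ν' D ≠ ⊤)
    (hout : ν.restrict Dᶜ = ν'.restrict Dᶜ) : P ≪ P' := by
  have hfin : IsFiniteMeasure (ν.restrict D) := isFiniteMeasure_restrict.2 hνD
  have hfin' : IsFiniteMeasure (ν'.restrict D) := isFiniteMeasure_restrict.2 hν'D
  have hin := hasPoissonVoids_finitePoisson (ν.restrict D)
  have hin' := hasPoissonVoids_finitePoisson (ν'.restrict D)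
  have hPout := h.map_inter hD.compl
  have := hPout.isProbabilityMeasure
  have := hin.isProbabilityMeasure
  have := hin'.isProbabilityMeasure
  have hdecomp := hPout.map_union hin
  have hdecomp' := hPout.map_union hin'
  rw [add_comm, Measure.restrict_add_restrict_compl hD] at hdecomp
  rw [hout, add_comm, Measure.restrict_add_restrict_compl hD] at hdecomp'
  rw [h.unique hdecomp, h'.unique hdecomp']
  exact (Measure.AbsolutelyContinuous.rfl.prod
    (finitePoisson_absolutelyContinuous (hac.restrict D))).map measurable_config_union

end HasPoissonVoids

end Poisson

section Existence

variable {X : Type*} [MetricSpace X]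

/-- The `i`-th half-open annulus of unit width around `o`. -/
def annulus (o : X) (i : ℕ) : Set X := {x | ⌊dist x o⌋₊ = i}

lemma annulus_subset_closedBall (o : X) (i : ℕ) : annulus o i ⊆ closedBall o (i + 1) := by
  rintro x rfl
  exact (Nat.lt_floor_add_one (dist x o)).le

lemma finite_setOf_not_disjoint_annulus (o : X) {K : Set X} (hK : IsBounded K) :
    {i | ¬Disjoint (annulus o i) K}.Finite := by
  obtain ⟨R, hR⟩ := hK.subset_closedBall o
  refine (finite_Iic ⌊R⌋₊).subset fun i hi => ?_
  obtain ⟨x, rfl, hxK⟩ := not_disjoint_iff.1 hi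
  exact Nat.floor_le_floor (hR hxK)

lemma pairwise_disjoint_annulus (o : X) : Pairwise (Disjoint on annulus o) := fun _ _ hij =>
  disjoint_left.2 fun _ hx hx' => hij (hx.symm.trans hx')

lemma iUnion_annulus (o : X) : ⋃ i, annulus o i = univ :=
  eq_univ_of_forall fun _ => mem_iUnion.2 ⟨_, rfl⟩

variable [MeasurableSpace X] [BorelSpace X]

lemma measurableSet_annulus (o : X) (i : ℕ) : MeasurableSet (annulus o i) :=
  (Nat.measurable_floor.comp (continuous_id.dist continuous_const).measurable)
    (measurableSet_singleton i)

lemma exists_hasPoissonVoids [ProperSpace X] [Nonempty X] (ν : Measure X)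
    [IsFiniteMeasureOnCompacts ν] : ∃ P, HasPoissonVoids ν P := by
  obtain ⟨o⟩ := ‹Nonempty X›
  have hfin (i : ℕ) : IsFiniteMeasure (ν.restrict (annulus o i)) :=
    isFiniteMeasure_restrict.2
      (isBounded_closedBall.subset (annulus_subset_closedBall o i)).measure_lt_top.ne
  have hQ (i : ℕ) := hasPoissonVoids_finitePoisson (ν.restrict (annulus o i))
  have (i : ℕ) := (hQ i).isProbabilityMeasure
  exact ⟨_, HasPoissonVoids.map_glue (fun _ => finite_setOf_not_disjoint_annulus o)
    (measurableSet_annulus o) (pairwise_disjoint_annulus o) (iUnion_annulus o) hQ⟩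

end Existence

section Transfer

variable {X : Type*} [MetricSpace X]

/-- Moving the points in `D` from the first configuration to the second. The superposition of the
two configurations is unchanged. -/
def transferPts (D : Set X) (p : Config X × Config X) : Config X × Config X :=
  (p.1.inter Dᶜ, p.2 ∪ p.1.inter D)

lemma preimage_transferPts_voidEvent (A B D : Set X) :
    transferPts D ⁻¹' (voidEvent A ×ˢ voidEvent B) =
      voidEvent (A ∩ Dᶜ ∪ B ∩ D) ×ˢ voidEvent B := by
  ext p
  have hinter (A D : Set X) : p.1.inter D ∈ voidEvent A ↔ p.1 ∈ voidEvent (A ∩ D) := by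
    rw [← preimage_inter_voidEvent, mem_preimage]
  have hunion : p.2 ∪ p.1.inter D ∈ voidEvent B ↔ p.2 ∈ voidEvent B ∧ p.1.inter D ∈ voidEvent B :=
    disjoint_union_left
  rw [mem_preimage, transferPts, mem_prod, mem_prod, voidEvent_union, mem_inter_iff, hunion,
    hinter, hinter]
  tauto

variable [MeasurableSpace X] [SecondCountableTopology X] [BorelSpace X]

lemma measurable_transferPts {D : Set X} (hD : MeasurableSet D) : Measurable (transferPts D) :=
  ((measurable_config_inter hD.compl).comp measurable_fst).prodMk
    (measurable_config_union.comp
      (measurable_snd.prodMk ((measurable_config_inter hD).comp measurable_fst)))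

lemma HasPoissonVoids.map_transferPts {ν ν' : Measure X} {P P' Q Q' : Measure (Config X)}
    (h : HasPoissonVoids ν P) (h' : HasPoissonVoids ν' P') {D : Set X} (hD : MeasurableSet D)
    (hQ : HasPoissonVoids (ν.restrict Dᶜ) Q) (hQ' : HasPoissonVoids (ν' + ν.restrict D) Q') :
    (P.prod P').map (transferPts D) = Q.prod Q' := by
  have := h.isProbabilityMeasure
  have := h'.isProbabilityMeasure
  have := hQ.isProbabilityMeasure
  have := hQ'.isProbabilityMeasure
  refine (measure_config_prod_eq fun A B hA hB => ?_).symm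
  have hdisj : Disjoint (A ∩ Dᶜ) (B ∩ D) :=
    (disjoint_compl_left (a := D)).mono inter_subset_right inter_subset_right
  rw [Measure.map_apply (measurable_transferPts hD)
      ((measurableSet_voidEvent hA).prod (measurableSet_voidEvent hB)),
    preimage_transferPts_voidEvent, Measure.prod_prod,
    h.measure_voidEvent _ ((hA.inter hD.compl).union (hB.inter hD)), h'.measure_voidEvent B hB,
    hQ.measure_voidEvent A hA, hQ'.measure_voidEvent B hB, measure_union hdisj (hB.inter hD),
    Measure.add_apply, Measure.restrict_apply hA, Measure.restrict_apply hB, expNeg_add, expNeg_add]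
  ring

lemma HasPoissonVoids.map_transferPts_absolutelyContinuous {ν ν' : Measure X}
    {P P' : Measure (Config X)} (h : HasPoissonVoids ν P) (h' : HasPoissonVoids ν' P')
    (hac : ν ≪ ν') {D : Set X} (hD : MeasurableSet D) (hνD : ν D ≠ ⊤) (hν'D : ν' D ≠ ⊤) :
    (P.prod P').map (transferPts D) ≪ P.prod P' := by
  have hfin : IsFiniteMeasure (ν.restrict D) := isFiniteMeasure_restrict.2 hνD
  have hQ := h.map_inter hD.compl
  have hQ' := h'.map_union (hasPoissonVoids_finitePoisson (ν.restrict D))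
  have := h.isProbabilityMeasure
  have := h'.isProbabilityMeasure
  have := hQ.isProbabilityMeasure
  have := hQ'.isProbabilityMeasure
  rw [h.map_transferPts h' hD hQ hQ']
  refine (hQ.absolutelyContinuous h Measure.restrict_le_self.absolutelyContinuous hD ?_ hνD ?_).prod
    (hQ'.absolutelyContinuous h' ?_ hD ?_ hν'D ?_)
  · exact ((Measure.restrict_apply_le _ _).trans_lt hνD.lt_top).ne
  · rw [Measure.restrict_restrict hD.compl, inter_self]
  · exact Measure.AbsolutelyContinuous.rfl.add_left
      (Measure.restrict_le_self.absolutelyContinuous.trans hac)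
  · rw [Measure.add_apply, Measure.restrict_apply_self]
    exact ENNReal.add_ne_top.2 ⟨hν'D, hνD⟩
  · rw [Measure.restrict_add, Measure.restrict_restrict hD.compl, compl_inter_self,
      Measure.restrict_empty, add_zero]

end Transfer

/-! ### Hops inside an open set -/

section ConnectedComponentIn

open scoped Topology

variable {X : Type*} [TopologicalSpace X] {V S : Set X} {p q u : X}

lemma mem_of_mem_connectedComponentIn (h : q ∈ connectedComponentIn V p) : p ∈ V :=
  connectedComponentIn_nonempty_iff.1 ⟨q, h⟩

lemma mem_connectedComponentIn_symm (h : q ∈ connectedComponentIn V p) :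
    p ∈ connectedComponentIn V q :=
  connectedComponentIn_eq h ▸ mem_connectedComponentIn (mem_of_mem_connectedComponentIn h)

lemma mem_connectedComponentIn_trans (h : q ∈ connectedComponentIn V p)
    (h' : u ∈ connectedComponentIn V q) : u ∈ connectedComponentIn V p :=
  connectedComponentIn_eq h ▸ h'

lemma connectedComponentIn_subset_of_forall_mem_nhds (hpV : p ∈ V) (hpS : p ∈ S)
    (h : ∀ x ∈ V, ∃ N ∈ 𝓝 x, (N ∩ S).Nonempty → N ⊆ S) : connectedComponentIn V p ⊆ S := by
  have hcover : V ⊆ interior S ∪ interior Sᶜ := fun x hx => by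
    obtain ⟨N, hN, hNS⟩ := h x hx
    by_cases hmeet : (N ∩ S).Nonempty
    · exact .inl (mem_interior_iff_mem_nhds.2 (Filter.mem_of_superset hN (hNS hmeet)))
    · exact .inr (mem_interior_iff_mem_nhds.2 (Filter.mem_of_superset hN
        fun y hy hyS => hmeet ⟨y, hy, hyS⟩))
  have hp : p ∈ interior S := (hcover hpV).resolve_right fun hp => interior_subset hp hpS
  exact (isPreconnected_connectedComponentIn.subset_left_of_subset_union isOpen_interior
    isOpen_interior (disjoint_compl_right.mono interior_subset interior_subset)
    ((connectedComponentIn_subset _ _).trans hcover)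
    ⟨p, mem_connectedComponentIn hpV, hp⟩).trans interior_subset

end ConnectedComponentIn

section Hop

variable {X : Type*} [MetricSpace X] {V W S T : Set X} {p q u : X} {n m : ℕ}

lemma image_connectedComponentIn (γ : X ≃ᵢ X) (hp : p ∈ V) :
    γ '' connectedComponentIn V p = connectedComponentIn (γ '' V) (γ p) :=
  γ.toHomeomorph.image_connectedComponentIn hp

lemma image_inter_ball (γ : X ≃ᵢ X) {c : X} {r : ℝ} :
    γ '' (V ∩ ball c r) = γ '' V ∩ ball (γ c) r := by
  rw [image_inter γ.injective, γ.image_ball]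

/-- The points that can be joined to a point of `S` inside `V ∩ ball c 2`, for some centre `c`.
Balls of a fixed size make a hop a local move, so that the number of hops between two points of a
component of `V` controls their distance and is invariant under isometries. -/
def hop (V S : Set X) : Set X := ⋃ p ∈ S, ⋃ c, connectedComponentIn (V ∩ ball c 2) p

/-- The points reached from `S` by `n` successive hops inside `V`. -/
def reach (V : Set X) (n : ℕ) (S : Set X) : Set X := (hop V)^[n] S

lemma mem_hop : q ∈ hop V S ↔ ∃ p ∈ S, ∃ c, q ∈ connectedComponentIn (V ∩ ball c 2) p := by
  simp only [hop, mem_iUnion, exists_prop]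

lemma mem_hop_singleton : q ∈ hop V {p} ↔ ∃ c, q ∈ connectedComponentIn (V ∩ ball c 2) p := by
  simp only [mem_hop, mem_singleton_iff, exists_eq_left]

lemma mem_hop_singleton_comm : q ∈ hop V {p} ↔ p ∈ hop V {q} := by
  simp only [mem_hop_singleton]
  exact exists_congr fun c => ⟨mem_connectedComponentIn_symm, mem_connectedComponentIn_symm⟩

lemma hop_mono (h : S ⊆ T) : hop V S ⊆ hop V T := biUnion_subset_biUnion_left h

lemma hop_subset : hop V S ⊆ V :=
  iUnion₂_subset fun _ _ => iUnion_subset fun _ =>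
    (connectedComponentIn_subset _ _).trans inter_subset_left

lemma subset_hop (hS : S ⊆ V) : S ⊆ hop V S := fun p hp =>
  mem_hop.2 ⟨p, hp, p, mem_connectedComponentIn ⟨hS hp, mem_ball_self two_pos⟩⟩

lemma reach_succ : reach V (n + 1) S = hop V (reach V n S) := iterate_succ_apply' _ _ _

lemma reach_succ' : reach V (n + 1) S = reach V n (hop V S) := rfl

lemma reach_add : reach V (m + n) S = reach V n (reach V m S) := by
  rw [reach, add_comm, iterate_add_apply]; rfl

lemma reach_mono (h : S ⊆ T) : reach V n S ⊆ reach V n T := by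
  induction n with
  | zero => exact h
  | succ n ih => simpa only [reach_succ] using hop_mono ih

lemma reach_subset (hS : S ⊆ V) : reach V n S ⊆ V := by
  cases n with
  | zero => exact hS
  | succ n => exact reach_succ.subset.trans hop_subset

lemma reach_subset_reach_of_le (hS : S ⊆ V) (h : n ≤ m) : reach V n S ⊆ reach V m S := by
  induction h with
  | refl => exact Subset.rfl
  | step _ ih => exact ih.trans ((subset_hop (reach_subset hS)).trans reach_succ.symm.subset)

lemma dist_le_of_mem_hop_singleton (h : q ∈ hop V {p}) : dist p q ≤ 4 := by
  obtain ⟨c, hc⟩ := mem_hop_singleton.1 h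
  have hp := mem_ball.1 (mem_of_mem_connectedComponentIn hc).2
  have hq := mem_ball.1 (connectedComponentIn_subset _ _ hc).2
  linarith [dist_triangle_right p q c]

lemma dist_le_of_mem_reach_singleton (h : q ∈ reach V n {p}) : dist p q ≤ 4 * n := by
  induction n generalizing q with
  | zero => simp [mem_singleton_iff.1 h]
  | succ n ih =>
    obtain ⟨z, hz, c, hc⟩ := mem_hop.1 (reach_succ.subset h)
    have := dist_le_of_mem_hop_singleton (mem_hop_singleton.2 ⟨c, hc⟩)
    push_cast
    linarith [ih hz, dist_triangle p z q]

lemma isOpen_hop [LocallyConnectedSpace X] (hV : IsOpen V) : IsOpen (hop V S) :=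
  isOpen_biUnion fun _ _ => isOpen_iUnion fun _ => (hV.inter isOpen_ball).connectedComponentIn

lemma isOpen_reach [LocallyConnectedSpace X] (hV : IsOpen V) (hS : IsOpen S) :
    IsOpen (reach V n S) := by
  cases n with
  | zero => exact hS
  | succ n => rw [reach_succ]; exact isOpen_hop hV

lemma exists_mem_reach_of_mem_connectedComponentIn [LocallyConnectedSpace X] (hV : IsOpen V)
    (h : q ∈ connectedComponentIn V p) : ∃ n, q ∈ reach V n {p} := by
  suffices hsub : connectedComponentIn V p ⊆ ⋃ n, reach V n {p} from mem_iUnion.1 (hsub h)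
  refine connectedComponentIn_subset_of_forall_mem_nhds (mem_of_mem_connectedComponentIn h)
    (mem_iUnion.2 ⟨0, mem_singleton p⟩) fun x hx => ⟨hop V {x}, (isOpen_hop hV).mem_nhds
      (subset_hop (singleton_subset_iff.2 hx) (mem_singleton x)), ?_⟩
  rintro ⟨y, hyx, hy⟩
  obtain ⟨n, hn⟩ := mem_iUnion.1 hy
  have hxn : x ∈ reach V (n + 1) {p} := reach_succ.symm.subset
    (hop_mono (singleton_subset_iff.2 hn) (mem_hop_singleton_comm.1 hyx))
  exact ((hop_mono (singleton_subset_iff.2 hxn)).trans reach_succ.symm.subset).trans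
    (subset_iUnion (fun n => reach V n {p}) (n + 2))

lemma image_hop (γ : X ≃ᵢ X) : γ '' hop V S = hop (γ '' V) (γ '' S) := by
  have hcomp (p c : X) : γ '' connectedComponentIn (V ∩ ball c 2) p =
      connectedComponentIn (γ '' V ∩ ball (γ c) 2) (γ p) := by
    rw [← image_inter_ball]
    by_cases hp : p ∈ V ∩ ball c 2
    · exact image_connectedComponentIn γ hp
    · rw [connectedComponentIn_eq_empty hp, image_empty,
        connectedComponentIn_eq_empty (mt γ.injective.mem_set_image.1 hp)]
  simp only [hop, image_iUnion, biUnion_image, hcomp]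
  exact iUnion₂_congr fun p _ =>
    γ.surjective.iUnion_comp fun c => connectedComponentIn (γ '' V ∩ ball c 2) (γ p)

lemma image_reach (γ : X ≃ᵢ X) : γ '' reach V n S = reach (γ '' V) n (γ '' S) := by
  induction n with
  | zero => rfl
  | succ n ih => rw [reach_succ, reach_succ, image_hop, ih]

/-- The union of the unbounded connected components of `W`. -/
def unboundedPart (W : Set X) : Set X := {u | ¬ IsBounded (connectedComponentIn W u)}

lemma unboundedPart_subset : unboundedPart W ⊆ W := fun u hu => by
  by_contra huW
  exact hu (connectedComponentIn_eq_empty huW ▸ isBounded_empty)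

lemma unboundedPart_mono (h : W ⊆ V) : unboundedPart W ⊆ unboundedPart V := fun u hu hb =>
  hu (hb.subset (connectedComponentIn_mono u h))

lemma connectedComponentIn_subset_unboundedPart (hu : u ∈ unboundedPart W) :
    connectedComponentIn W u ⊆ unboundedPart W := fun _ hv hb =>
  hu (connectedComponentIn_eq hv ▸ hb)

lemma isOpen_unboundedPart [LocallyConnectedSpace X] (hW : IsOpen W) :
    IsOpen (unboundedPart W) :=
  isOpen_iff_mem_nhds.2 fun _ hu =>
    Filter.mem_of_superset
      (hW.connectedComponentIn.mem_nhds (mem_connectedComponentIn (unboundedPart_subset hu)))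
      (connectedComponentIn_subset_unboundedPart hu)

lemma image_unboundedPart (γ : X ≃ᵢ X) :
    γ '' unboundedPart W = unboundedPart (γ '' W) := by
  ext u
  obtain ⟨u, rfl⟩ := γ.surjective u
  rw [γ.injective.mem_set_image]
  by_cases hu : u ∈ W
  · rw [unboundedPart, unboundedPart, mem_ofPred_eq, mem_ofPred_eq,
      ← image_connectedComponentIn γ hu]
    refine not_congr ⟨fun h => γ.isometry.lipschitz.isBounded_image h, fun h => ?_⟩
    rw [← image_id (connectedComponentIn W u), ← γ.symm_comp_self, image_comp]
    exact γ.symm.isometry.lipschitz.isBounded_image h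
  · exact iff_of_false (mt (@unboundedPart_subset _ _ _ _) hu)
      fun h => hu (γ.injective.mem_set_image.1 (unboundedPart_subset h))

end Hop

/-! ### The transport -/

section Transport

variable {X : Type*} [MetricSpace X] {V V₁ W : Set X} {C : Set X} {o p u x y z : X}
  {R : ℝ} {n k : ℕ}

/-- The connected components of `V ∩ ball x 2` that meet `ball x 1`. -/
def ballComps (V : Set X) (x : X) : Set (Set X) :=
  (fun p => connectedComponentIn (V ∩ ball x 2) p) '' (V ∩ ball x 1)

lemma mem_connectedComponentIn_ball_two (hp : p ∈ V ∩ ball x 1) :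
    p ∈ connectedComponentIn (V ∩ ball x 2) p :=
  mem_connectedComponentIn ⟨hp.1, ball_subset_ball one_le_two hp.2⟩

lemma subset_of_mem_ballComps (hC : C ∈ ballComps V x) : C ⊆ V := by
  obtain ⟨p, -, rfl⟩ := hC
  exact (connectedComponentIn_subset _ _).trans inter_subset_left

lemma encard_ballComps_le (V : Set X) (x : X) :
    (ballComps V x).encard ≤ numComps (V ∩ closedBall x 1) := by
  have hsurj : ∀ C ∈ ballComps V x, ∃ D ∈ comps (V ∩ closedBall x 1), D.Nonempty ∧ D ⊆ C := by
    rintro _ ⟨p, hp, rfl⟩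
    have hp' : p ∈ V ∩ closedBall x 1 := ⟨hp.1, ball_subset_closedBall hp.2⟩
    refine ⟨connectedComponentIn (V ∩ closedBall x 1) p, ⟨p, hp', rfl⟩,
      ⟨p, mem_connectedComponentIn hp'⟩, connectedComponentIn_mono p ?_⟩
    exact inter_subset_inter_right _ (closedBall_subset_ball one_lt_two)
  choose! D hD hDne hDC using hsurj
  refine encard_le_encard_of_injOn hD fun C hC C' hC' hCC' => ?_
  obtain ⟨q, hq⟩ := hDne C hC
  have hqC := hDC C hC hq
  have hqC' := hDC C' hC' (hCC'.subset hq)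
  obtain ⟨p, -, rfl⟩ := hC
  obtain ⟨p', -, rfl⟩ := hC'
  exact (connectedComponentIn_eq hqC).trans (connectedComponentIn_eq hqC').symm

lemma image_mem_ballComps (γ : X ≃ᵢ X) (hC : C ∈ ballComps V x) :
    γ '' C ∈ ballComps (γ '' V) (γ x) := by
  obtain ⟨p, hp, rfl⟩ := hC
  have hp₂ : p ∈ V ∩ ball x 2 := ⟨hp.1, ball_subset_ball one_le_two hp.2⟩
  rw [image_connectedComponentIn γ hp₂, image_inter_ball]
  exact ⟨γ p, image_inter_ball γ ▸ mem_image_of_mem γ hp, rfl⟩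

/-- After `n` hops inside `V` the set `C` has met the unbounded part of `W`, and all the meeting
points lie within distance `k` of `y`. -/
def Lands (V W C : Set X) (k : ℕ) (y : X) (n : ℕ) : Prop :=
  (reach V n C ∩ unboundedPart W).Nonempty ∧ reach V n C ∩ unboundedPart W ⊆ closedBall y k

/-- The point `x` sends mass to `y`: some component of `V` near `x` first meets the unbounded part
of `W` within distance `k` of `y`. -/
def Transports (V W : Set X) (k : ℕ) (x y : X) : Prop :=
  ∃ C ∈ ballComps V x, ∃ n, Lands V W C k y n

lemma Lands.dist_le {m : ℕ} (hC : C ⊆ V) (hy : Lands V W C k y n) (hz : Lands V W C k z m) :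
    dist y z ≤ 2 * k := by
  wlog h : n ≤ m generalizing n m y z
  · rw [dist_comm]
    exact this hz hy (le_of_not_ge h)
  obtain ⟨u, hu, huW⟩ := hy.1
  have hyu := mem_closedBall.1 (hy.2 ⟨hu, huW⟩)
  have hzu := mem_closedBall.1 (hz.2 ⟨reach_subset_reach_of_le hC h hu, huW⟩)
  linarith [dist_triangle_left y z u]

lemma Lands.image (γ : X ≃ᵢ X) (h : Lands V W C k y n) :
    Lands (γ '' V) (γ '' W) (γ '' C) k (γ y) n := by
  rw [Lands, ← image_reach, ← image_unboundedPart, ← image_inter γ.injective, ← γ.image_closedBall]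
  exact ⟨h.1.image γ, image_mono h.2⟩

lemma Transports.image (γ : X ≃ᵢ X) (h : Transports V W k x y) :
    Transports (γ '' V) (γ '' W) k (γ x) (γ y) := by
  obtain ⟨C, hC, n, hn⟩ := h
  exact ⟨γ '' C, image_mem_ballComps γ hC, n, hn.image γ⟩

/-- The components of `V` near a bounded set that reach the unbounded part of `W` do so in a
uniformly bounded number of hops, if `V` has finitely many components near densely many points. -/
lemma exists_forall_reach_inter_unboundedPart_nonempty [ProperSpace X]
    (hfin : Dense {q | (ballComps V q).Finite}) (W : Set X) (o : X) (R : ℝ) :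
    ∃ N, ∀ w ∈ V ∩ closedBall o R, ∀ n, (reach V n {w} ∩ unboundedPart W).Nonempty →
      (reach V N {w} ∩ unboundedPart W).Nonempty := by
  obtain ⟨T, hT, hTfin, hTcover⟩ := (isCompact_closedBall o R).elim_finite_subcover_image
    (b := {q | (ballComps V q).Finite}) (c := fun q => ball q 1) (fun _ _ => isOpen_ball)
    fun x _ => by
      obtain ⟨q, hq, hxq⟩ := hfin.exists_dist_lt x one_pos
      exact mem_biUnion hq hxq
  have hclasses : (⋃ q ∈ T, ballComps V q).Finite := hTfin.biUnion hT
  have hhit (C : Set X) : ∃ N, ∀ n, (reach V n C ∩ unboundedPart W).Nonempty →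
      (reach V N C ∩ unboundedPart W).Nonempty := by
    by_cases h : ∃ n, (reach V n C ∩ unboundedPart W).Nonempty
    · exact h.imp fun N hN _ _ => hN
    · exact ⟨0, fun n hn => absurd ⟨n, hn⟩ h⟩
  choose N hN using hhit
  refine ⟨hclasses.toFinset.sup N + 1, fun w hw n hn => ?_⟩
  obtain ⟨q, hq, hwq⟩ := mem_iUnion₂.1 (hTcover hw.2)
  set C := connectedComponentIn (V ∩ ball q 2) w
  have hC : C ∈ ballComps V q := ⟨w, ⟨hw.1, hwq⟩, rfl⟩
  have hwC : {w} ⊆ C := singleton_subset_iff.2 (mem_connectedComponentIn_ball_two ⟨hw.1, hwq⟩)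
  have hCw : C ⊆ hop V {w} := fun v hv => mem_hop_singleton.2 ⟨q, hv⟩
  have hNC : N C ≤ hclasses.toFinset.sup N :=
    Finset.le_sup (hclasses.mem_toFinset.2 (mem_biUnion hq hC))
  refine (hN C n (hn.mono (inter_subset_inter_left _ (reach_mono hwC)))).mono
    (inter_subset_inter_left _ ?_)
  calc reach V (N C) C ⊆ reach V (N C) (hop V {w}) := reach_mono hCw
    _ = reach V (N C + 1) {w} := reach_succ'.symm
    _ ⊆ _ := reach_subset_reach_of_le (singleton_subset_iff.2 hw.1) (by gcongr)

/-- A hop inside `V` that leaves a component of `V₁` passes through the ball outside of which `V`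
and `V₁` agree. -/
lemma mem_connectedComponentIn_or_exists_of_mem_hop
    (hVV₁ : V \ closedBall o R ⊆ V₁) (hu : u ∈ hop V {p}) :
    u ∈ connectedComponentIn V₁ p ∨
      ∃ w ∈ V ∩ closedBall o R, w ∈ hop V {p} ∧ u ∈ hop V {w} := by
  obtain ⟨c, hc⟩ := mem_hop_singleton.1 hu
  by_cases hmeet : (connectedComponentIn (V ∩ ball c 2) p ∩ closedBall o R).Nonempty
  · obtain ⟨w, hw, hwR⟩ := hmeet
    refine .inr ⟨w, ⟨(connectedComponentIn_subset _ _ hw).1, hwR⟩, mem_hop_singleton.2 ⟨c, hw⟩,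
      mem_hop_singleton.2 ⟨c, connectedComponentIn_eq hw ▸ hc⟩⟩
  · refine .inl (isPreconnected_connectedComponentIn.subset_connectedComponentIn
      (mem_connectedComponentIn (mem_of_mem_connectedComponentIn hc)) (fun w hw => ?_) hc)
    exact hVV₁ ⟨(connectedComponentIn_subset _ _ hw).1, fun hwR => hmeet ⟨w, hw, hwR⟩⟩

lemma mem_connectedComponentIn_or_exists_of_mem_reach (hV₁ : p ∈ V₁)
    (hVV₁ : V \ closedBall o R ⊆ V₁) (hu : u ∈ reach V n {p}) :
    u ∈ connectedComponentIn V₁ p ∨ ∃ w ∈ V ∩ closedBall o R,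
      ∃ i j, i + j = n + 1 ∧ w ∈ reach V i {p} ∧ u ∈ reach V j {w} := by
  induction n generalizing u with
  | zero => rw [mem_singleton_iff.1 hu]; exact .inl (mem_connectedComponentIn hV₁)
  | succ n ih =>
    obtain ⟨v, hv, c, hc⟩ := mem_hop.1 (reach_succ.subset hu)
    rcases ih hv with hvC | ⟨w, hw, i, j, hij, hwi, hvj⟩
    · rcases mem_connectedComponentIn_or_exists_of_mem_hop hVV₁ (mem_hop_singleton.2 ⟨c, hc⟩) with
        huC | ⟨w, hw, hwv, huw⟩
      · exact .inl (connectedComponentIn_eq hvC ▸ huC)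
      · exact .inr ⟨w, hw, n + 1, 1, rfl,
          reach_succ.symm.subset (hop_mono (singleton_subset_iff.2 hv) hwv), huw⟩
    · exact .inr ⟨w, hw, i, j + 1, by omega, hwi,
        reach_succ.symm.subset (mem_hop.2 ⟨v, hvj, c, hc⟩)⟩

/-- Every shortest chain of hops from the component of `p₀` to the unbounded part of `W` has to
cross the ball where `V` and `V₁` differ, and from there on it has uniformly bounded length. -/
lemma exists_forall_transports [ProperSpace X] [LocallyConnectedSpace X] (hV : IsOpen V)
    (hV₁V : V₁ ⊆ V) (hVV₁ : V \ closedBall o R ⊆ V₁)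
    (hfin : Dense {q | (ballComps V q).Finite}) {p₀ u₀ : X}
    (hD : Disjoint (connectedComponentIn V₁ p₀) (unboundedPart W))
    (hu₀ : u₀ ∈ unboundedPart W) (hp₀u₀ : u₀ ∈ connectedComponentIn V p₀) :
    ∃ k, ∀ p ∈ connectedComponentIn V₁ p₀, ∀ x, dist p x < 1 → Transports V W k x o := by
  classical
  obtain ⟨N, hN⟩ := exists_forall_reach_inter_unboundedPart_nonempty hfin W o R
  obtain ⟨k, hk⟩ := exists_nat_ge (R + 4 * (N + 2))
  refine ⟨k, fun p hp x hpx => ?_⟩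
  have hpV₁ : p ∈ V₁ := connectedComponentIn_subset _ _ hp
  have hpx' : p ∈ V ∩ ball x 1 := ⟨hV₁V hpV₁, hpx⟩
  set C := connectedComponentIn (V ∩ ball x 2) p
  have hpC : {p} ⊆ C := singleton_subset_iff.2 (mem_connectedComponentIn_ball_two hpx')
  have hCp : C ⊆ hop V {p} := fun v hv => mem_hop_singleton.2 ⟨x, hv⟩
  have hexists : ∃ n, (reach V n C ∩ unboundedPart W).Nonempty := by
    have hpu₀ : u₀ ∈ connectedComponentIn V p :=
      connectedComponentIn_eq (connectedComponentIn_mono p₀ hV₁V hp) ▸ hp₀u₀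
    obtain ⟨n, hn⟩ := exists_mem_reach_of_mem_connectedComponentIn hV hpu₀
    exact ⟨n, u₀, reach_mono hpC hn, hu₀⟩
  refine ⟨C, ⟨p, hpx', rfl⟩, Nat.find hexists, Nat.find_spec hexists, fun v ⟨hv, hvW⟩ => ?_⟩
  have hvp : v ∈ reach V (Nat.find hexists + 1) {p} :=
    reach_succ'.symm.subset (reach_mono hCp hv)
  obtain ⟨w, hw, i, j, hij, hwi, hvj⟩ :=
    (mem_connectedComponentIn_or_exists_of_mem_reach hpV₁ hVV₁ hvp).resolve_left
      fun h => disjoint_left.1 hD (mem_connectedComponentIn_trans hp h) hvW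
  obtain ⟨v', hv', hv'W⟩ := hN w hw j ⟨v, hvj, hvW⟩
  have hmin : Nat.find hexists ≤ i + N := Nat.find_min' hexists
    ⟨v', reach_add.symm.subset
      (reach_mono (singleton_subset_iff.2 (reach_mono hpC hwi)) hv'), hv'W⟩
  have hj : (j : ℝ) ≤ N + 2 := by exact_mod_cast (by omega : j ≤ N + 2)
  have hwv := dist_le_of_mem_reach_singleton hvj
  have hwo := mem_closedBall.1 hw.2
  rw [mem_closedBall]
  linarith [dist_triangle_left v o w]

end Transport

/-! ### Random open sets -/

section RandomOpen

variable {X : Type*} [MetricSpace X]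

lemma measurableSet_setOf_exists_mem {Ω ι : Type*} [MeasurableSpace Ω] {s : Set ι}
    (hs : s.Countable) {f : ι → Ω → Prop} (hf : ∀ i ∈ s, MeasurableSet {ω | f i ω}) :
    MeasurableSet {ω | ∃ i ∈ s, f i ω} := by
  convert MeasurableSet.biUnion hs hf
  ext ω
  simp

lemma measurableSet_setOf_forall_mem_imp {Ω ι : Type*} [MeasurableSpace Ω] {s : Set ι}
    (hs : s.Countable) {f g : ι → Ω → Prop} (hf : ∀ i ∈ s, MeasurableSet {ω | f i ω})
    (hg : ∀ i ∈ s, MeasurableSet {ω | g i ω}) :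
    MeasurableSet {ω | ∀ i ∈ s, f i ω → g i ω} := by
  simp only [ofPred_forall]
  exact .biInter hs fun i hi => (hf i hi).himp (hg i hi)

lemma exists_countable_isPreconnected_basis (X : Type*) [MetricSpace X] [ProperSpace X]
    [LocallyConnectedSpace X] :
    ∃ 𝓑 : Set (Set X), 𝓑.Countable ∧
      (∀ B ∈ 𝓑, IsOpen B ∧ IsPreconnected B ∧ IsCompact (closure B)) ∧
      ∀ O : Set X, IsOpen O → ∀ x ∈ O, ∃ B ∈ 𝓑, x ∈ B ∧ closure B ⊆ O := by
  obtain ⟨Q, hQ, hQd⟩ := TopologicalSpace.exists_countable_dense X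
  let balls : Set (Set X) := image2 (fun q (n : ℕ) => ball q (1 / (n + 1))) Q univ
  have hballs : balls.Countable := hQ.image2 countable_univ _
  refine ⟨image2 connectedComponentIn balls Q, hballs.image2 hQ _, ?_, fun O hO x hx => ?_⟩
  · rintro _ ⟨_, ⟨q, -, n, -, rfl⟩, z, -, rfl⟩
    exact ⟨isOpen_ball.connectedComponentIn, isPreconnected_connectedComponentIn,
      (isBounded_ball.subset (connectedComponentIn_subset _ _)).isCompact_closure⟩
  · obtain ⟨ε, hε, hεO⟩ := Metric.isOpen_iff.1 hO x hx
    obtain ⟨n, hn⟩ := exists_nat_one_div_lt (half_pos hε)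
    have hn₀ : (0 : ℝ) < 1 / (n + 1) := by positivity
    obtain ⟨q, hq, hxq⟩ := hQd.exists_dist_lt x hn₀
    obtain ⟨z, hz, hzQ⟩ := hQd.inter_open_nonempty _
      (isOpen_ball (x := q) (ε := 1 / (n + 1))).connectedComponentIn
      ⟨x, mem_connectedComponentIn hxq⟩
    refine ⟨_, ⟨_, ⟨q, hq, n, mem_univ n, rfl⟩, z, hzQ, rfl⟩,
      mem_connectedComponentIn_symm hz, fun y hy => hεO ?_⟩
    have hyq : dist y q ≤ 1 / (n + 1) := mem_closedBall.1
      (closure_minimal ((connectedComponentIn_subset _ _).trans ball_subset_closedBall)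
        isClosed_closedBall hy)
    rw [mem_ball]
    linarith [dist_triangle_right y x q]

/-- The finite subfamilies of `𝓑` whose union is connected and contains `p` and `q`. -/
def links (𝓑 : Set (Set X)) (p q : X) : Set (Finset 𝓑) :=
  {F | IsPreconnected (⋃ B ∈ F, (B : Set X)) ∧ p ∈ ⋃ B ∈ F, (B : Set X) ∧
    q ∈ ⋃ B ∈ F, (B : Set X)}

lemma mem_connectedComponentIn_iff_exists_links {𝓑 : Set (Set X)}
    (h𝓑 : ∀ B ∈ 𝓑, IsOpen B ∧ IsPreconnected B)
    (hbasis : ∀ O : Set X, IsOpen O → ∀ x ∈ O, ∃ B ∈ 𝓑, x ∈ B ∧ closure B ⊆ O)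
    {V : Set X} (hV : IsOpen V) {p q : X} :
    q ∈ connectedComponentIn V p ↔
      ∃ F ∈ links 𝓑 p q, ∀ B ∈ F, closure (B : Set X) ⊆ V := by
  classical
  constructor
  · intro hq
    suffices hsub : connectedComponentIn V p ⊆
        {y | ∃ F ∈ links 𝓑 p y, ∀ B ∈ F, closure (B : Set X) ⊆ V} from hsub hq
    have hp := mem_of_mem_connectedComponentIn hq
    refine connectedComponentIn_subset_of_forall_mem_nhds hp ?_ fun x hx => ?_
    · obtain ⟨B, hB, hpB, hBV⟩ := hbasis V hV p hp
      refine ⟨{⟨B, hB⟩}, ?_, by simpa using hBV⟩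
      have hunion : ⋃ A ∈ ({⟨B, hB⟩} : Finset 𝓑), (A : Set X) = B := by
        simp only [Finset.mem_singleton, iUnion_iUnion_eq_left]
      rw [links, mem_ofPred_eq, hunion]
      exact ⟨(h𝓑 B hB).2, hpB, hpB⟩
    · obtain ⟨B, hB, hxB, hBV⟩ := hbasis V hV x hx
      refine ⟨B, (h𝓑 B hB).1.mem_nhds hxB, ?_⟩
      rintro ⟨z, hzB, F, ⟨hF, hpF, hzF⟩, hFV⟩ y hy
      have hunion : ⋃ A ∈ insert ⟨B, hB⟩ F, (A : Set X) = B ∪ ⋃ A ∈ F, (A : Set X) := by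
        simp only [Finset.mem_insert, iUnion_iUnion_eq_or_left]
      refine ⟨insert ⟨B, hB⟩ F, ?_, Finset.forall_mem_insert .. |>.2 ⟨hBV, hFV⟩⟩
      rw [links, mem_ofPred_eq, hunion]
      exact ⟨(h𝓑 B hB).2.union z hzB hzF hF, .inr hpF, .inl hy⟩
  · rintro ⟨F, ⟨hF, hpF, hqF⟩, hFV⟩
    exact hF.subset_connectedComponentIn hpF
      (iUnion₂_subset fun B hB => subset_closure.trans (hFV B hB)) hqF

section Dense

variable {V : Set X} {Q : Set X} {u : X}

lemma numUcomps_eq_one_iff :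
    numUcomps V = 1 ↔ ∃ u ∈ unboundedPart V, unboundedPart V ⊆ connectedComponentIn V u := by
  have hmem (v : X) (hv : v ∈ unboundedPart V) : connectedComponentIn V v ∈ ucomps V :=
    ⟨⟨v, unboundedPart_subset hv, rfl⟩, hv⟩
  rw [numUcomps, encard_eq_one]
  constructor
  · rintro ⟨C, hC⟩
    obtain ⟨⟨u, -, rfl⟩, hu⟩ : C ∈ ucomps V := hC.symm.subset (mem_singleton C)
    refine ⟨u, hu, fun v hv => ?_⟩
    rw [← mem_singleton_iff.1 (hC.subset (hmem v hv))]
    exact mem_connectedComponentIn (unboundedPart_subset hv)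
  · rintro ⟨u, hu, hsub⟩
    refine ⟨connectedComponentIn V u, eq_singleton_iff_unique_mem.2 ⟨hmem u hu, ?_⟩⟩
    rintro _ ⟨⟨v, -, rfl⟩, hv⟩
    exact (connectedComponentIn_eq (hsub hv)).symm

variable [LocallyConnectedSpace X]

lemma unboundedPart_subset_connectedComponentIn_iff_of_dense (hV : IsOpen V) (hQ : Dense Q) :
    unboundedPart V ⊆ connectedComponentIn V u ↔
      ∀ v ∈ Q, v ∈ unboundedPart V → v ∈ connectedComponentIn V u := by
  refine ⟨fun h v _ hv => h hv, fun h v hv => ?_⟩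
  obtain ⟨q, hq, hqQ⟩ := hQ.inter_open_nonempty _ hV.connectedComponentIn
    ⟨v, mem_connectedComponentIn (unboundedPart_subset hv)⟩
  exact mem_connectedComponentIn_trans
    (h q hqQ (connectedComponentIn_subset_unboundedPart hv hq)) (mem_connectedComponentIn_symm hq)

lemma numUcomps_eq_one_iff_of_dense (hV : IsOpen V) (hQ : Dense Q) :
    numUcomps V = 1 ↔ ∃ u ∈ Q, u ∈ unboundedPart V ∧
      ∀ v ∈ Q, v ∈ unboundedPart V → v ∈ connectedComponentIn V u := by
  simp only [← unboundedPart_subset_connectedComponentIn_iff_of_dense hV hQ, numUcomps_eq_one_iff]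
  refine ⟨fun ⟨u, hu, hsub⟩ => ?_, fun ⟨u, _, hu, hsub⟩ => ⟨u, hu, hsub⟩⟩
  obtain ⟨q, hq, hqQ⟩ := hQ.inter_open_nonempty _ (isOpen_unboundedPart hV) ⟨u, hu⟩
  exact ⟨q, hqQ, hq, connectedComponentIn_eq (hsub hq) ▸ hsub⟩

lemma ballComps_eq_image_of_dense (hV : IsOpen V) (hQ : Dense Q) (x : X) :
    ballComps V x =
      (fun p : Q => connectedComponentIn (V ∩ ball x 2) p) '' {p | ↑p ∈ V ∩ ball x 1} := by
  refine Subset.antisymm ?_ (image_subset_iff.2 fun p hp => mem_image_of_mem _ hp)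
  rintro _ ⟨p, hp, rfl⟩
  obtain ⟨q, ⟨hq, hq₁⟩, hqQ⟩ := hQ.inter_open_nonempty _
    ((hV.inter isOpen_ball).connectedComponentIn.inter (hV.inter isOpen_ball))
    ⟨p, mem_connectedComponentIn_ball_two hp, hp⟩
  exact ⟨⟨q, hqQ⟩, hq₁, (connectedComponentIn_eq hq).symm⟩

lemma finite_ballComps_iff_of_dense (hV : IsOpen V) (hQ : Dense Q) (x : X) :
    (ballComps V x).Finite ↔ ∃ F : Finset Q, ∀ p : Q, ↑p ∈ V ∩ ball x 1 →
      ∃ f ∈ F, ↑p ∈ connectedComponentIn (V ∩ ball x 2) f := by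
  classical
  rw [ballComps_eq_image_of_dense hV hQ]
  constructor
  · intro h
    obtain ⟨F, -, hF⟩ := Finset.subset_set_image_iff.1 h.coe_toFinset.subset
    refine ⟨F, fun p hp => ?_⟩
    obtain ⟨f, hf, hfp⟩ := Finset.mem_image.1
      (hF.symm.subset (h.mem_toFinset.2 (mem_image_of_mem _ hp)))
    exact ⟨f, hf, hfp.symm.subset (mem_connectedComponentIn_ball_two hp)⟩
  · rintro ⟨F, hF⟩
    refine (F.finite_toSet.image fun p : Q => connectedComponentIn (V ∩ ball x 2) p).subset
      (image_subset_iff.2 fun p hp => ?_)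
    obtain ⟨f, hf, hpf⟩ := hF p hp
    exact ⟨f, hf, connectedComponentIn_eq hpf⟩

end Dense

variable {Ω : Type*} [MeasurableSpace Ω] {V W S : Ω → Set X} {x y : Ω → X}

/-- A random open set, with the σ-algebra on open sets generated by the events that a given
compact set is contained in it. -/
structure IsRandomOpen (V : Ω → Set X) : Prop where
  isOpen (ω : Ω) : IsOpen (V ω)
  measurableSet_subset {K : Set X} (hK : IsCompact K) : MeasurableSet {ω | K ⊆ V ω}

lemma isRandomOpen_ball [MeasurableSpace X] [OpensMeasurableSpace X] (hx : Measurable x)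
    (r : ℝ) : IsRandomOpen fun ω => ball (x ω) r where
  isOpen ω := isOpen_ball
  measurableSet_subset {K} hK := by
    have hopen : IsOpen {c : X | K ⊆ ball c r} := by
      refine isOpen_iff_eventually.2 fun c hc => ?_
      refine hK.eventually_forall_of_forall_eventually fun y hy => ?_
      exact (isOpen_lt (continuous_snd.dist continuous_fst) continuous_const).mem_nhds (hc hy)
    exact hx hopen.measurableSet

namespace IsRandomOpen

lemma inter (hV : IsRandomOpen V) (hW : IsRandomOpen W) :
    IsRandomOpen fun ω => V ω ∩ W ω where
  isOpen ω := (hV.isOpen ω).inter (hW.isOpen ω)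
  measurableSet_subset hK := by
    simp only [subset_inter_iff]
    exact (hV.measurableSet_subset hK).inter (hW.measurableSet_subset hK)

lemma comp {Ω' : Type*} [MeasurableSpace Ω'] {f : Ω' → Ω} (hV : IsRandomOpen V)
    (hf : Measurable f) : IsRandomOpen fun ω => V (f ω) where
  isOpen ω := hV.isOpen (f ω)
  measurableSet_subset hK := hf (hV.measurableSet_subset hK)

lemma measurableSet_mem (hV : IsRandomOpen V) (p : X) : MeasurableSet {ω | p ∈ V ω} := by
  simpa only [singleton_subset_iff] using hV.measurableSet_subset (isCompact_singleton (x := p))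

variable [ProperSpace X] [LocallyConnectedSpace X]

lemma measurableSet_mem_connectedComponentIn (hV : IsRandomOpen V) (p q : X) :
    MeasurableSet {ω | q ∈ connectedComponentIn (V ω) p} := by
  obtain ⟨𝓑, h𝓑, h𝓑mem, hbasis⟩ := exists_countable_isPreconnected_basis X
  have := h𝓑.to_subtype
  simp only [mem_connectedComponentIn_iff_exists_links
    (fun B hB => ⟨(h𝓑mem B hB).1, (h𝓑mem B hB).2.1⟩) hbasis (hV.isOpen _)]
  refine measurableSet_setOf_exists_mem (to_countable _) fun F _ => ?_
  simp only [ofPred_forall]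
  exact Finset.measurableSet_biInter F fun B _ => hV.measurableSet_subset (h𝓑mem B B.2).2.2

/-- The centre of a hop is a deterministic function of the finite chain of basic sets that
realises it, so no countable choice of centres is needed. -/
lemma measurableSet_mem_hop_singleton (hV : IsRandomOpen V) (p q : X) :
    MeasurableSet {ω | q ∈ hop (V ω) {p}} := by
  obtain ⟨𝓑, h𝓑, h𝓑mem, hbasis⟩ := exists_countable_isPreconnected_basis X
  have := h𝓑.to_subtype
  have hmem (ω : Ω) : q ∈ hop (V ω) {p} ↔
      ∃ F ∈ links 𝓑 p q ∩ {F | ∃ c, ∀ B ∈ F, closure (B : Set X) ⊆ ball c 2},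
        ∀ B ∈ F, closure (B : Set X) ⊆ V ω := by
    simp only [mem_hop_singleton, mem_connectedComponentIn_iff_exists_links
      (fun B hB => ⟨(h𝓑mem B hB).1, (h𝓑mem B hB).2.1⟩) hbasis ((hV.isOpen ω).inter isOpen_ball),
      subset_inter_iff, mem_inter_iff, mem_ofPred_eq]
    exact ⟨fun ⟨c, F, hF, h⟩ => ⟨F, ⟨hF, c, fun B hB => (h B hB).2⟩, fun B hB => (h B hB).1⟩,
      fun ⟨F, ⟨hF, c, hc⟩, h⟩ => ⟨c, F, hF, fun B hB => ⟨h B hB, hc B hB⟩⟩⟩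
  simp only [hmem]
  refine measurableSet_setOf_exists_mem (to_countable _) fun F _ => ?_
  simp only [ofPred_forall]
  exact Finset.measurableSet_biInter F fun B _ => hV.measurableSet_subset (h𝓑mem B B.2).2.2

lemma measurableSet_mem_reach (hV : IsRandomOpen V) (hS : ∀ ω, IsOpen (S ω))
    (hSm : ∀ q, MeasurableSet {ω | q ∈ S ω}) (n : ℕ) (q : X) :
    MeasurableSet {ω | q ∈ reach (V ω) n (S ω)} := by
  obtain ⟨Q, hQ, hQd⟩ := TopologicalSpace.exists_countable_dense X
  induction n generalizing q with
  | zero => exact hSm q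
  | succ n ih =>
    have hmem (ω : Ω) : q ∈ reach (V ω) (n + 1) (S ω) ↔
        ∃ z ∈ Q, z ∈ reach (V ω) n (S ω) ∧ q ∈ hop (V ω) {z} := by
      rw [reach_succ]
      constructor
      · intro hq
        obtain ⟨z, hz, hzq⟩ := mem_hop.1 hq
        obtain ⟨w, ⟨hw, hwq⟩, hwQ⟩ := hQd.inter_open_nonempty _
          ((isOpen_reach (n := n) (hV.isOpen ω) (hS ω)).inter
            (isOpen_hop (S := {q}) (hV.isOpen ω)))
          ⟨z, hz, mem_hop_singleton_comm.1 (mem_hop_singleton.2 hzq)⟩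
        exact ⟨w, hwQ, hw, mem_hop_singleton_comm.1 hwq⟩
      · rintro ⟨z, -, hz, hzq⟩
        exact hop_mono (singleton_subset_iff.2 hz) hzq
    simp only [hmem]
    exact measurableSet_setOf_exists_mem hQ fun z _ =>
      (ih z).inter (hV.measurableSet_mem_hop_singleton z q)

lemma measurableSet_mem_unboundedPart (hV : IsRandomOpen V) (u : X) :
    MeasurableSet {ω | u ∈ unboundedPart (V ω)} := by
  obtain ⟨Q, hQ, hQd⟩ := TopologicalSpace.exists_countable_dense X
  have hmem (ω : Ω) : u ∈ unboundedPart (V ω) ↔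
      ∀ N : ℕ, ∃ q ∈ Q \ closedBall u N, q ∈ connectedComponentIn (V ω) u := by
    constructor
    · intro hu N
      obtain ⟨z, hz, hzN⟩ := not_subset.1 fun h => hu (isBounded_closedBall.subset h)
      obtain ⟨q, ⟨hq, hqN⟩, hqQ⟩ := hQd.inter_open_nonempty _
        ((hV.isOpen ω).connectedComponentIn.inter isClosed_closedBall.isOpen_compl) ⟨z, hz, hzN⟩
      exact ⟨q, ⟨hqQ, hqN⟩, hq⟩
    · intro h hb
      obtain ⟨r, hr⟩ := hb.subset_closedBall u
      obtain ⟨N, hN⟩ := exists_nat_ge r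
      obtain ⟨q, hqN, hq⟩ := h N
      exact hqN.2 (closedBall_subset_closedBall hN (hr hq))
  simp only [hmem, ofPred_forall]
  exact .iInter fun N => measurableSet_setOf_exists_mem (hQ.mono sdiff_subset) fun q _ =>
    hV.measurableSet_mem_connectedComponentIn u q

lemma measurableSet_numUcomps_eq_one (hV : IsRandomOpen V) :
    MeasurableSet {ω | numUcomps (V ω) = 1} := by
  obtain ⟨Q, hQ, hQd⟩ := TopologicalSpace.exists_countable_dense X
  simp only [numUcomps_eq_one_iff_of_dense (hV.isOpen _) hQd]
  exact measurableSet_setOf_exists_mem hQ fun u _ =>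
    (hV.measurableSet_mem_unboundedPart u).inter <|
      measurableSet_setOf_forall_mem_imp hQ (fun v _ => hV.measurableSet_mem_unboundedPart v)
        fun v _ => hV.measurableSet_mem_connectedComponentIn u v

lemma measurableSet_finite_ballComps (hV : IsRandomOpen V) (x : X) :
    MeasurableSet {ω | (ballComps (V ω) x).Finite} := by
  obtain ⟨Q, hQ, hQd⟩ := TopologicalSpace.exists_countable_dense X
  have := hQ.to_subtype
  have hball (r : ℝ) : IsRandomOpen fun ω => V ω ∩ ball x r :=
    hV.inter ⟨fun _ => isOpen_ball, fun _ => .const _⟩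
  simp only [finite_ballComps_iff_of_dense (hV.isOpen _) hQd]
  simp only [ofPred_exists, ofPred_forall]
  exact .iUnion fun F => .iInter fun p => .himp ((hball 1).measurableSet_mem p) <|
    measurableSet_setOf_exists_mem F.countable_toSet fun f _ =>
      (hball 2).measurableSet_mem_connectedComponentIn f p

lemma measurableSet_lands [MeasurableSpace X] [OpensMeasurableSpace X] (hV : IsRandomOpen V)
    (hW : IsRandomOpen W) (hS : ∀ ω, IsOpen (S ω)) (hSm : ∀ q, MeasurableSet {ω | q ∈ S ω})
    (hy : Measurable y) (k n : ℕ) : MeasurableSet {ω | Lands (V ω) (W ω) (S ω) k (y ω) n} := by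
  obtain ⟨Q, hQ, hQd⟩ := TopologicalSpace.exists_countable_dense X
  let A (ω : Ω) : Set X := reach (V ω) n (S ω) ∩ unboundedPart (W ω)
  have hA (ω : Ω) : IsOpen (A ω) :=
    (isOpen_reach (hV.isOpen ω) (hS ω)).inter (isOpen_unboundedPart (hW.isOpen ω))
  have hAm (q : X) : MeasurableSet {ω | q ∈ A ω} :=
    (hV.measurableSet_mem_reach hS hSm n q).inter (hW.measurableSet_mem_unboundedPart q)
  have hmem (ω : Ω) : Lands (V ω) (W ω) (S ω) k (y ω) n ↔
      (∃ q ∈ Q, q ∈ A ω) ∧ ∀ q ∈ Q, q ∈ A ω → dist q (y ω) ≤ k := by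
    refine and_congr ⟨fun h => ?_, fun ⟨q, _, hq⟩ => ⟨q, hq⟩⟩
      ⟨fun h q _ hq => h hq, fun h => ?_⟩
    · obtain ⟨q, hq, hqQ⟩ := hQd.inter_open_nonempty _ (hA ω) h
      exact ⟨q, hqQ, hq⟩
    · exact (hQd.open_subset_closure_inter (hA ω)).trans
        (closure_minimal (fun q hq => h q hq.2 hq.1) isClosed_closedBall)
  simp only [hmem]
  exact (measurableSet_setOf_exists_mem hQ fun q _ => hAm q).inter <|
    measurableSet_setOf_forall_mem_imp hQ (fun q _ => hAm q) fun q _ =>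
      hy (isClosed_le (continuous_const.dist continuous_id) continuous_const).measurableSet

lemma measurableSet_transports [MeasurableSpace X] [OpensMeasurableSpace X]
    (hV : IsRandomOpen V) (hW : IsRandomOpen W) (hx : Measurable x) (hy : Measurable y) (k : ℕ) :
    MeasurableSet {ω | Transports (V ω) (W ω) k (x ω) (y ω)} := by
  obtain ⟨Q, hQ, hQd⟩ := TopologicalSpace.exists_countable_dense X
  have hball (r : ℝ) : IsRandomOpen fun ω => V ω ∩ ball (x ω) r := hV.inter (isRandomOpen_ball hx r)
  have := hQ.to_subtype
  simp only [Transports, ballComps_eq_image_of_dense (hV.isOpen _) hQd, exists_mem_image,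
    ofPred_exists, ofPred_and]
  exact .iUnion fun p => ((hball 1).measurableSet_mem p).inter <| .iUnion fun n =>
    hV.measurableSet_lands hW (fun ω => ((hball 2).isOpen ω).connectedComponentIn)
      (fun q => (hball 2).measurableSet_mem_connectedComponentIn p q) hy k n

end IsRandomOpen

end RandomOpen

/-! ### Vacant sets -/

section Vacant

variable {X : Type*} [MetricSpace X] {s t : Config X} {x : X}

lemma mem_vacant : x ∈ vacant s ↔ ∀ p ∈ s.1, 1 < dist x p := by
  simp [vacant, occupied]

lemma isOpen_vacant (s : Config X) : IsOpen (vacant s) := by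
  have hlf : LocallyFinite fun p : s.1 => closedBall (p : X) 1 := fun x => by
    refine ⟨ball x 1, ball_mem_nhds x one_pos,
      ((s.2 (ball x 2) isBounded_ball).preimage Subtype.val_injective.injOn).subset ?_⟩
    rintro p ⟨z, hzp, hzx⟩
    refine ⟨p.2, ?_⟩
    rw [mem_closedBall] at hzp
    rw [mem_ball] at hzx ⊢
    linarith [dist_triangle_left (p : X) x z]
  rw [vacant, occupied, biUnion_eq_iUnion, isOpen_compl_iff]
  exact hlf.isClosed_iUnion fun _ => isClosed_closedBall

lemma vacant_anti (h : s.1 ⊆ t.1) : vacant t ⊆ vacant s :=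
  fun _ hx => mem_vacant.2 fun p hp => mem_vacant.1 hx p (h hp)

lemma vacant_mapIso (γ : X ≃ᵢ X) (s : Config X) : vacant (s.mapIso γ) = γ '' vacant s := by
  ext x
  obtain ⟨x, rfl⟩ := γ.surjective x
  rw [γ.injective.mem_set_image, mem_vacant, mem_vacant, Config.mapIso, forall_mem_image]
  simp only [γ.dist_eq]

lemma mapIso_union (γ : X ≃ᵢ X) (s t : Config X) :
    (s ∪ t).mapIso γ = s.mapIso γ ∪ t.mapIso γ :=
  Subtype.ext (image_union γ s.1 t.1)

lemma transferPts_fst_union_snd (D : Set X) (w : Config X × Config X) :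
    (transferPts D w).1 ∪ (transferPts D w).2 = w.1 ∪ w.2 := by
  refine Subtype.ext ?_
  change w.1.1 ∩ Dᶜ ∪ (w.2.1 ∪ w.1.1 ∩ D) = w.1.1 ∪ w.2.1
  rw [union_left_comm, union_comm (w.1.1 ∩ Dᶜ), inter_union_compl, union_comm]

lemma vacant_transferPts_diff_subset (o : X) (r : ℝ) (w : Config X × Config X) :
    vacant (transferPts (closedBall o r) w).1 \ closedBall o (r + 1) ⊆ vacant w.1 := by
  rintro x ⟨hx, hxo⟩
  refine mem_vacant.2 fun p hp => ?_
  by_cases hpo : p ∈ closedBall o r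
  · rw [mem_closedBall, not_le] at hxo
    linarith [dist_triangle x p o, mem_closedBall.1 hpo]
  · exact mem_vacant.1 hx p ⟨hp, hpo⟩

lemma ball_subset_vacant_transferPts (o : X) (r : ℝ) (w : Config X × Config X) :
    ball o r ⊆ vacant (transferPts (closedBall o (r + 1)) w).1 := by
  refine fun x hx => mem_vacant.2 ?_
  rintro p ⟨-, hp⟩
  rw [mem_compl_iff, mem_closedBall, not_le] at hp
  linarith [dist_triangle_left p o x, mem_ball.1 hx]

lemma isRandomOpen_vacant [ProperSpace X] [MeasurableSpace X] [BorelSpace X] :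
    IsRandomOpen (vacant : Config X → Set X) where
  isOpen := isOpen_vacant
  measurableSet_subset {K} hK := by
    have hvoid : {s : Config X | K ⊆ vacant s} = voidEvent (cthickening 1 K) := by
      ext s
      rw [hK.cthickening_eq_biUnion_closedBall zero_le_one, voidEvent, mem_ofPred_eq,
        mem_ofPred_eq, disjoint_iUnion₂_right]
      refine forall₂_congr fun x _ => ?_
      simp only [mem_vacant, disjoint_left, mem_closedBall, not_le, dist_comm x]
    rw [hvoid]
    exact measurableSet_voidEvent isClosed_cthickening.measurableSet

end Vacant

/-! ### Mass transport -/

section MassTransport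

open Measure

variable {X : Type*} [MetricSpace X]

lemma exists_seq_pairwise_dist_ge {C : Set X} (hC : ¬IsBounded C) (r : ℝ) :
    ∃ p : ℕ → X, (∀ n, p n ∈ C) ∧ Pairwise fun i j => r ≤ dist (p i) (p j) := by
  have hsymm : Std.Symm fun x y : X => r ≤ dist x y := ⟨fun x y h => dist_comm x y ▸ h⟩
  refine exists_seq_of_forall_finset_exists' (· ∈ C) (fun x y => r ≤ dist x y) fun s _ => ?_
  have hbdd : IsBounded (⋃ x ∈ s, closedBall x r) :=
    (isBounded_biUnion_finset s).2 fun _ _ => isBounded_closedBall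
  obtain ⟨y, hy, hys⟩ := not_subset.1 fun h => hC (hbdd.subset h)
  refine ⟨y, hy, fun x hx => ?_⟩
  by_contra! hxy
  exact hys (mem_biUnion hx (mem_closedBall'.2 hxy.le))

lemma measure_setOf_apply_mem_thickening {m : Measure (X ≃ᵢ X)} [m.IsMulLeftInvariant]
    [m.IsOpenPosMeasure] {o : X} (htrans : ∀ x, ∃ g : X ≃ᵢ X, g o = x) {C : Set X}
    (hC : ¬IsBounded C) {r : ℝ} (hr : 0 < r) : m {g | g o ∈ thickening r C} = ⊤ := by
  let near (x : X) : Set (X ≃ᵢ X) := {g | dist (g o) x < r}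
  have hnear (x : X) : m (near x) = m (near o) := by
    obtain ⟨h, rfl⟩ := htrans x
    have hpre : (h⁻¹ * ·) ⁻¹' near o = near (h o) := by
      ext g
      change dist (h⁻¹ (g o)) o < r ↔ dist (g o) (h o) < r
      rw [dist_inv_apply_left]
    rw [← hpre, measure_preimage_mul]
  have hpos : m (near o) ≠ 0 := (isOpen_setOf_dist_isometryEquiv_lt o o r).measure_ne_zero m
    ⟨1, by simpa [near] using hr⟩
  obtain ⟨p, hpC, hp⟩ := exists_seq_pairwise_dist_ge hC (2 * r)
  have hdisj : Pairwise (Disjoint on fun n => near (p n)) := fun i j hij =>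
    disjoint_left.2 fun g (hi : dist _ _ < r) (hj : dist _ _ < r) => by
      linarith [hp hij, dist_triangle_left (p i) (p j) (g o)]
  refine top_le_iff.1 ?_
  calc
    ⊤ = ∑' n, m (near (p n)) := by
      simp only [hnear, ENNReal.tsum_const_eq_top_of_ne_zero hpos]
    _ = m (⋃ n, near (p n)) := (measure_iUnion hdisj fun n =>
      (isOpen_setOf_dist_isometryEquiv_lt o (p n) r).measurableSet).symm
    _ ≤ m {g | g o ∈ thickening r C} := measure_mono <| iUnion_subset fun n _ hg =>
      mem_thickening_iff.2 ⟨p n, hpC n, hg⟩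

lemma measure_setOf_transports_inv_apply_le {m : Measure (X ≃ᵢ X)} [m.IsMulRightInvariant]
    {V W : Set X} {o : X} (hfin : (ballComps V o).Finite) (k : ℕ) :
    m {g | Transports V W k o (g⁻¹ o)} ≤
      m {g | dist (g o) o ≤ 2 * k} * ((ballComps V o).encard : ℝ≥0∞) := by
  let landing (C : Set X) : Set (X ≃ᵢ X) := {g | ∃ n, Lands V W C k (g⁻¹ o) n}
  have hlanding (C : Set X) (hC : C ∈ hfin.toFinset) :
      m (landing C) ≤ m {g | dist (g o) o ≤ 2 * k} := by
    rcases (landing C).eq_empty_or_nonempty with hempty | ⟨h, n, hn⟩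
    · simp [hempty]
    · rw [← measure_preimage_mul_right m h⁻¹ {g | dist (g o) o ≤ 2 * k}]
      refine measure_mono ?_
      rintro g ⟨n', hn'⟩
      have hdist := hn'.dist_le (subset_of_mem_ballComps (hfin.mem_toFinset.1 hC)) hn
      rwa [dist_inv_apply_left, dist_comm] at hdist
  calc
    m {g | Transports V W k o (g⁻¹ o)} ≤ m (⋃ C ∈ hfin.toFinset, landing C) := by
      refine measure_mono ?_
      rintro g ⟨_, hC, hn⟩
      exact mem_biUnion (hfin.mem_toFinset.2 hC) hn
    _ ≤ ∑ C ∈ hfin.toFinset, m (landing C) := measure_biUnion_finset_le _ _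
    _ ≤ ∑ _ ∈ hfin.toFinset, m {g | dist (g o) o ≤ 2 * k} := Finset.sum_le_sum hlanding
    _ = m {g | dist (g o) o ≤ 2 * k} * ((ballComps V o).encard : ℝ≥0∞) := by
      rw [Finset.sum_const, hfin.encard_eq_coe_toFinset_card, nsmul_eq_mul, mul_comm]
      simp

lemma prod_measure_le_of_measurePreserving {Ω G : Type*} [MeasurableSpace Ω] [MeasurableSpace G]
    {P : Measure Ω} [SFinite P] {m : Measure G} [SFinite m] {φ : G → Ω → Ω}
    (hφ : ∀ g, MeasurePreserving (φ g) P P) {S T : Set (Ω × G)} (hS : MeasurableSet S)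
    (hT : MeasurableSet T) (hST : ∀ ω g, (ω, g) ∈ S → (φ g ω, g) ∈ T) :
    P.prod m S ≤ P.prod m T := by
  rw [prod_apply_symm hS, prod_apply_symm hT]
  refine lintegral_mono fun g => ?_
  rw [← (hφ g).measure_preimage (measurable_prodMk_right hT).nullMeasurableSet]
  exact measure_mono fun ω hω => hST ω g hω

variable [ProperSpace X] [MeasurableSpace X] [BorelSpace X] {o : X} {P P' : Measure (Config X)}

lemma IsoInvariant.measurePreserving (hP : IsoInvariant P) (γ : X ≃ᵢ X) :
    MeasurePreserving (Config.mapIso γ) P P :=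
  ⟨measurable_mapIso γ, hP γ⟩

lemma ae_finite_ballComps_apply (hP : IsoInvariant P)
    (hfin : ∀ᵐ ω ∂P, (ballComps (vacant ω) o).Finite) (γ : X ≃ᵢ X) :
    ∀ᵐ ω ∂P, (ballComps (vacant ω) (γ o)).Finite := by
  filter_upwards [(hP.measurePreserving γ⁻¹).quasiMeasurePreserving.ae hfin] with ω hω
  refine (hω.image fun C => γ '' C).subset fun C hC => ?_
  have hC' := image_mem_ballComps γ⁻¹ hC
  rw [← vacant_mapIso, IsometryEquiv.inv_apply_self] at hC'
  refine ⟨_, hC', ?_⟩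
  simp only [image_image, IsometryEquiv.apply_inv_self, image_id']

variable [LocallyConnectedSpace X]

lemma ae_finite_ballComps
    (hnum : ∫⁻ ω, (numComps (vacant ω ∩ closedBall o 1) : ℝ≥0∞) ∂P < ⊤) :
    ∀ᵐ ω ∂P, (ballComps (vacant ω) o).Finite := by
  have hmeas := isRandomOpen_vacant.measurableSet_finite_ballComps (X := X) o
  rw [ae_iff]
  by_contra hpos
  refine hnum.not_ge ?_
  calc
    ⊤ = ∫⁻ _ in {ω | ¬(ballComps (vacant ω) o).Finite}, ⊤ ∂P := by
      rw [setLIntegral_const, ENNReal.top_mul hpos]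
    _ ≤ ∫⁻ ω in {ω | ¬(ballComps (vacant ω) o).Finite},
          (numComps (vacant ω ∩ closedBall o 1) : ℝ≥0∞) ∂P := by
      refine setLIntegral_mono' hmeas.compl fun ω hω => ?_
      rw [← ENat.toENNReal_top, ← encard_eq_top hω]
      exact ENat.toENNReal_le.2 (encard_ballComps_le _ _)
    _ ≤ ∫⁻ ω, (numComps (vacant ω ∩ closedBall o 1) : ℝ≥0∞) ∂P := setLIntegral_le_lintegral _ _

variable [IsProbabilityMeasure P'] {m : Measure (X ≃ᵢ X)} [IsFiniteMeasureOnCompacts m]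
  [m.IsMulRightInvariant]

lemma lintegral_measure_setOf_transports_inv_apply_lt_top
    (hnum : ∫⁻ ω, (numComps (vacant ω ∩ closedBall o 1) : ℝ≥0∞) ∂P < ⊤) (k : ℕ) :
    ∫⁻ w, m {g | Transports (vacant w.1) (vacant (w.1 ∪ w.2)) k o (g⁻¹ o)} ∂P.prod P' < ⊤ := by
  have hball : m {g | dist (g o) o ≤ 2 * k} < ⊤ :=
    (isCompact_setOf_dist_isometryEquiv_le o (2 * k)).measure_lt_top
  calc
    _ ≤ ∫⁻ w, m {g | dist (g o) o ≤ 2 * k} *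
          (numComps (vacant w.1 ∩ closedBall o 1) : ℝ≥0∞) ∂P.prod P' := by
      refine lintegral_mono_ae ?_
      filter_upwards [quasiMeasurePreserving_fst.ae (ae_finite_ballComps hnum)] with w hw
      refine (measure_setOf_transports_inv_apply_le hw k).trans ?_
      gcongr
      exact encard_ballComps_le _ _
    _ = m {g | dist (g o) o ≤ 2 * k} *
          ∫⁻ w, (numComps (vacant w.1 ∩ closedBall o 1) : ℝ≥0∞) ∂P.prod P' :=
      lintegral_const_mul' _ _ hball.ne
    _ ≤ m {g | dist (g o) o ≤ 2 * k} *
          ∫⁻ ω, (numComps (vacant ω ∩ closedBall o 1) : ℝ≥0∞) ∂P := by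
      gcongr
      simpa using lintegral_prod_le (μ := P) (ν := P') fun w =>
        (numComps (vacant w.1 ∩ closedBall o 1) : ℝ≥0∞)
    _ < ⊤ := ENNReal.mul_lt_top hball hnum

lemma ae_measure_setOf_transports_apply_lt_top [SFinite P] [SFinite m]
    (hP : IsoInvariant P) (hP' : IsoInvariant P')
    (hnum : ∫⁻ ω, (numComps (vacant ω ∩ closedBall o 1) : ℝ≥0∞) ∂P < ⊤) (k : ℕ) :
    ∀ᵐ w ∂P.prod P', m {g | Transports (vacant w.1) (vacant (w.1 ∪ w.2)) k (g o) o} < ⊤ := by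
  let S : Set ((Config X × Config X) × (X ≃ᵢ X)) :=
    {a | Transports (vacant a.1.1) (vacant (a.1.1 ∪ a.1.2)) k (a.2 o) o}
  let T : Set ((Config X × Config X) × (X ≃ᵢ X)) :=
    {a | Transports (vacant a.1.1) (vacant (a.1.1 ∪ a.1.2)) k o (a.2⁻¹ o)}
  have heval : Measurable fun g : X ≃ᵢ X => g o := (continuous_isometryEquiv_eval o).measurable
  have hfst : IsRandomOpen fun a : (Config X × Config X) × (X ≃ᵢ X) => vacant a.1.1 :=
    isRandomOpen_vacant.comp (measurable_fst.comp measurable_fst)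
  have hunion : IsRandomOpen fun a : (Config X × Config X) × (X ≃ᵢ X) => vacant (a.1.1 ∪ a.1.2) :=
    isRandomOpen_vacant.comp (measurable_config_union.comp measurable_fst)
  have hS : MeasurableSet S :=
    hfst.measurableSet_transports hunion (heval.comp measurable_snd) measurable_const k
  have hT : MeasurableSet T :=
    hfst.measurableSet_transports hunion measurable_const (heval.comp measurable_snd.inv) k
  have hST : (P.prod P').prod m S ≤ (P.prod P').prod m T := by
    refine prod_measure_le_of_measurePreserving (φ := fun g => Prod.map _ _) (fun g =>
      (hP.measurePreserving g⁻¹).prod (hP'.measurePreserving g⁻¹)) hS hT fun w g hw => ?_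
    have himage := Transports.image g⁻¹ (mem_ofPred_eq ▸ hw)
    rwa [← vacant_mapIso, ← vacant_mapIso, mapIso_union, IsometryEquiv.inv_apply_self] at himage
  refine ae_lt_top (measurable_measure_prodMk_left hS) (ne_of_lt ?_)
  calc
    ∫⁻ w, m (Prod.mk w ⁻¹' S) ∂P.prod P' = (P.prod P').prod m S := (Measure.prod_apply hS).symm
    _ ≤ (P.prod P').prod m T := hST
    _ = ∫⁻ w, m (Prod.mk w ⁻¹' T) ∂P.prod P' := Measure.prod_apply hT
    _ < ⊤ := lintegral_measure_setOf_transports_inv_apply_lt_top hnum k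

end MassTransport

/-! ### Uniqueness -/

section Uniqueness

lemma exists_nat_mem_connectedComponentIn_ball {X : Type*} [MetricSpace X] [PreconnectedSpace X]
    [LocallyConnectedSpace X] (o p q : X) : ∃ N : ℕ, q ∈ connectedComponentIn (ball o N) p := by
  let S : Set X := {q | ∃ N : ℕ, q ∈ connectedComponentIn (ball o N) p}
  suffices hS : connectedComponentIn univ p ⊆ S by
    rw [connectedComponentIn_univ, PreconnectedSpace.connectedComponent_eq_univ] at hS
    exact hS (mem_univ q)
  have hself (x : X) : ∃ N : ℕ, x ∈ connectedComponentIn (ball o N) x :=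
    (exists_nat_gt (dist x o)).imp fun _ hN => mem_connectedComponentIn hN
  refine connectedComponentIn_subset_of_forall_mem_nhds (mem_univ p) (hself p) fun x _ => ?_
  obtain ⟨M, hM⟩ := hself x
  refine ⟨_, isOpen_ball.connectedComponentIn.mem_nhds hM, ?_⟩
  rintro ⟨z, hzx, N, hzp⟩ y hyx
  have hle (i : ℕ) (hi : i ≤ max M N) (v : X) :
      connectedComponentIn (ball o i) v ⊆ connectedComponentIn (ball o (max M N : ℕ)) v :=
    connectedComponentIn_mono v (ball_subset_ball (Nat.cast_le.2 hi))
  have hzy := mem_connectedComponentIn_trans (mem_connectedComponentIn_symm hzx) hyx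
  exact ⟨max M N, mem_connectedComponentIn_trans (hle N (le_max_right M N) p hzp)
    (hle M (le_max_left M N) z hzy)⟩

variable {X : Type*} [MetricSpace X] [ProperSpace X] {o : X} {w : Config X × Config X}

/-- The almost sure regularity of a pair `w` of configurations, with first vacant set `V` and
vacant set `W` of the superposition: `V` has finitely many components near densely many points,
and `o` receives finite mass, measured by the Haar measure of the isometry group. -/
structure IsTame (o : X) (w : Config X × Config X) : Prop where
  dense_finite_ballComps : Dense {q | (ballComps (vacant w.1) q).Finite}
  haar_lt_top (k : ℕ) : (Measure.haar : Measure (X ≃ᵢ X))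
    {g | Transports (vacant w.1) (vacant (w.1 ∪ w.2)) k (g o) o} < ⊤

/-- A second unbounded component of `vacant w.1` would miss the unbounded component of
`vacant (w.1 ∪ w.2)`. Emptying a large ball joins the two, after which all of the second component
sends its mass near `o`. -/
lemma numUcomps_vacant_fst_eq_one [PreconnectedSpace X] [LocallyConnectedSpace X]
    (htrans : ∀ x, ∃ g : X ≃ᵢ X, g o = x)
    (htame : ∀ N : ℕ, IsTame o (transferPts (closedBall o (N + 1)) w))
    (hone : numUcomps (vacant (w.1 ∪ w.2)) = 1) : numUcomps (vacant w.1) = 1 := by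
  rw [numUcomps_eq_one_iff] at hone ⊢
  obtain ⟨u, hu, huniq⟩ := hone
  have hWV : vacant (w.1 ∪ w.2) ⊆ vacant w.1 := vacant_anti subset_union_left
  refine ⟨u, unboundedPart_mono hWV hu, fun p hp => ?_⟩
  by_contra hpu
  have hdisj : Disjoint (connectedComponentIn (vacant w.1) p)
      (unboundedPart (vacant (w.1 ∪ w.2))) := disjoint_left.2 fun v hvp hv => hpu <|
    mem_connectedComponentIn_trans (connectedComponentIn_mono u hWV (huniq hv))
      (mem_connectedComponentIn_symm hvp)
  obtain ⟨N, hN⟩ := exists_nat_mem_connectedComponentIn_ball o p u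
  obtain ⟨k, hk⟩ := exists_forall_transports (isOpen_vacant _) (vacant_anti inter_subset_left)
    (vacant_transferPts_diff_subset o (N + 1) w) (htame N).dense_finite_ballComps hdisj hu
    (connectedComponentIn_mono p (ball_subset_vacant_transferPts o N w) hN)
  have hfinite := (htame N).haar_lt_top k
  rw [transferPts_fst_union_snd] at hfinite
  refine hfinite.not_ge ?_
  rw [← measure_setOf_apply_mem_thickening (m := Measure.haar) htrans hp one_pos]
  refine measure_mono fun g hg => ?_
  obtain ⟨q, hq, hgq⟩ := mem_thickening_iff.1 hg
  exact hk q hq (g o) (dist_comm q (g o) ▸ hgq)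

variable [MeasurableSpace X] [BorelSpace X] {P P' : Measure (Config X)}

lemma ae_isTame [PreconnectedSpace X] [SFinite P] [IsProbabilityMeasure P']
    (hsym : PointSymmetric X) (hP : IsoInvariant P) (hP' : IsoInvariant P')
    (hnum : ∫⁻ ω, (numComps (vacant ω ∩ closedBall o 1) : ℝ≥0∞) ∂P < ⊤) :
    ∀ᵐ w ∂P.prod P', IsTame o w := by
  have : Nonempty X := ⟨o⟩
  have := hsym.locallyConnectedSpace
  have := hsym.isMulRightInvariant_haar
  obtain ⟨Q, hQ, hQd⟩ := TopologicalSpace.exists_countable_dense X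
  have hfin : ∀ᵐ ω ∂P, ∀ q ∈ Q, (ballComps (vacant ω) q).Finite := by
    refine (ae_ball_iff hQ).2 fun q _ => ?_
    obtain ⟨γ, rfl⟩ := hsym.exists_isometryEquiv_apply_eq o q
    exact ae_finite_ballComps_apply hP (ae_finite_ballComps hnum) γ
  have hmass := ae_all_iff.2 fun k : ℕ =>
    ae_measure_setOf_transports_apply_lt_top (m := Measure.haar) hP hP' hnum k
  filter_upwards [Measure.quasiMeasurePreserving_fst.ae hfin, hmass] with w hw hw'
  exact ⟨hQd.mono hw, hw'⟩

lemma HasPoissonVoids.isoInvariant {ν : Measure X} (h : HasPoissonVoids ν P)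
    (hν : ∀ γ : X ≃ᵢ X, ν.map γ = ν) : IsoInvariant P := fun γ =>
  (hν γ ▸ h.map_mapIso γ).unique h

lemma ae_numUcomps_vacant_eq_one_iff [LocallyConnectedSpace X] [IsProbabilityMeasure P] :
    (∀ᵐ ω ∂P, numUcomps (vacant ω) = 1) ↔ P {ω | numUcomps (vacant ω) = 1} = 1 :=
  prob_compl_eq_zero_iff isRandomOpen_vacant.measurableSet_numUcomps_eq_one

lemma HasPoissonVoids.ae_numUcomps_vacant_eq_one [PreconnectedSpace X]
    (hsym : PointSymmetric X) {ν ν' : Measure X} [IsFiniteMeasureOnCompacts ν]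
    [IsFiniteMeasureOnCompacts ν'] (hP : HasPoissonVoids ν P) (hP' : HasPoissonVoids ν' P')
    (hν : ∀ γ : X ≃ᵢ X, ν.map γ = ν) (hν' : ∀ γ : X ≃ᵢ X, ν'.map γ = ν') (hac : ν ≪ ν')
    (hnum : ∫⁻ ω, (numComps (vacant ω ∩ closedBall o 1) : ℝ≥0∞) ∂P < ⊤)
    (hone : ∀ᵐ w ∂P.prod P', numUcomps (vacant (w.1 ∪ w.2)) = 1) :
    ∀ᵐ ω ∂P, numUcomps (vacant ω) = 1 := by
  have := hP.isProbabilityMeasure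
  have := hP'.isProbabilityMeasure
  have := hsym.locallyConnectedSpace
  have htame := ae_isTame hsym (hP.isoInvariant hν) (hP'.isoInvariant hν') hnum
  have htransfer : ∀ᵐ w ∂P.prod P', ∀ N : ℕ,
      IsTame o (transferPts (closedBall o (N + 1)) w) := ae_all_iff.2 fun N => by
    have hball : MeasurableSet (closedBall o ((N : ℝ) + 1)) := measurableSet_closedBall
    refine ae_of_ae_map (measurable_transferPts hball).aemeasurable
      (Measure.AbsolutelyContinuous.ae_le ?_ htame)
    exact hP.map_transferPts_absolutelyContinuous hP' hac hball measure_closedBall_lt_top.ne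
      measure_closedBall_lt_top.ne
  have hfst : MeasurePreserving Prod.fst (P.prod P') P := measurePreserving_fst
  rw [← hfst.map_eq, ae_map_iff hfst.aemeasurable
    isRandomOpen_vacant.measurableSet_numUcomps_eq_one]
  filter_upwards [htransfer, hone] with w hw hw'
  exact numUcomps_vacant_fst_eq_one (hsym.exists_isometryEquiv_apply_eq o) hw hw'

end Uniqueness

theorem uniqueness_monotonicity_vacant_general
    {X : Type*} [MetricSpace X] [ProperSpace X] [PreconnectedSpace X] [MeasurableSpace X]
    [BorelSpace X] (hsym : PointSymmetric X) (μ : Measure X) [IsFiniteMeasureOnCompacts μ]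
    (hμiso : ∀ γ : X ≃ᵢ X, Measure.map γ μ = μ) (o : X)
    (lam₁ lam₂ : ℝ≥0) (hlam : lam₁ < lam₂) (P₁ P₂ : Measure (Config X))
    (hP₁ : IsPoisson ((lam₁ : ℝ≥0∞) • μ) P₁) (hP₂ : IsPoisson ((lam₂ : ℝ≥0∞) • μ) P₂)
    (hNumComps : ∫⁻ ω, (numComps (vacant ω ∩ closedBall o 1) : ℝ≥0∞) ∂P₁ < ⊤)
    (h : P₂ {ω : Config X | numUcomps (vacant ω) = 1} = 1) :
    P₁ {ω : Config X | numUcomps (vacant ω) = 1} = 1 := by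
  have : Nonempty X := ⟨o⟩
  have := hsym.locallyConnectedSpace
  have := hP₁.1
  have := hP₂.1
  have hiso (c : ℝ≥0) (γ : X ≃ᵢ X) : (c • μ).map γ = c • μ := by rw [Measure.map_smul, hμiso]
  obtain ⟨P₃, hP₃⟩ := exists_hasPoissonVoids ((lam₂ - lam₁) • μ)
  have hac : lam₁ • μ ≪ (lam₂ - lam₁) • μ := by
    refine Measure.smul_absolutelyContinuous.trans ?_
    exact Measure.absolutelyContinuous_smul (ENNReal.coe_ne_zero.2 (tsub_pos_of_lt hlam).ne')
  have hadd : lam₁ • μ + (lam₂ - lam₁) • μ = lam₂ • μ := by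
    rw [← add_smul, add_tsub_cancel_of_le hlam.le]
  have hvoids₁ : HasPoissonVoids (lam₁ • μ) P₁ := hP₁.hasPoissonVoids
  have hunion : (P₁.prod P₃).map (fun w => w.1 ∪ w.2) = P₂ :=
    (hadd ▸ hvoids₁.map_union hP₃).unique hP₂.hasPoissonVoids
  have hone := hunion ▸ ae_numUcomps_vacant_eq_one_iff.2 h
  exact ae_numUcomps_vacant_eq_one_iff.1 <|
    hvoids₁.ae_numUcomps_vacant_eq_one hsym hP₃ (hiso lam₁) (hiso _) hac hNumComps
      (ae_of_ae_map measurable_config_union.aemeasurable hone)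

/-- **Uniqueness monotonicity for the vacant set** (Theorem 3(b)). -/
theorem uniqueness_monotonicity_vacant
    {X : Type*} [MetricSpace X] [ProperSpace X] [CompleteSpace X] [SimplyConnectedSpace X]
    [NoncompactSpace X] [MeasurableSpace X] [BorelSpace X] [Nonempty X]
    (hsym : PointSymmetric X)
    (μ : Measure X)
    (hμiso : ∀ γ : X ≃ᵢ X, Measure.map γ μ = μ)
    (hμball : ∀ (x : X) (r : ℝ), 0 < r → 0 < μ (closedBall x r) ∧ μ (closedBall x r) < ⊤)
    (o : X)
    (lam₁ lam₂ : ℝ≥0) (hlam₁ : 0 < lam₁) (hlam : lam₁ < lam₂)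
    (P₁ P₂ : Measure (Config X))
    (hP₁ : IsPoisson ((lam₁ : ℝ≥0∞) • μ) P₁)
    (hP₂ : IsPoisson ((lam₂ : ℝ≥0∞) • μ) P₂)
    (hNumComps : ∫⁻ ω, (numComps (vacant ω ∩ closedBall o 1) : ℝ≥0∞) ∂P₁ < ⊤)
    (h : P₂ {ω : Config X | numUcomps (vacant ω) = 1} = 1) :
    P₁ {ω : Config X | numUcomps (vacant ω) = 1} = 1 := by
  have : IsFiniteMeasureOnCompacts μ := ⟨fun K hK =>
    let ⟨r, hr, hKr⟩ := hK.isBounded.subset_closedBall_lt 0 o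
    (measure_mono hKr).trans_lt (hμball o r hr).2⟩
  exact uniqueness_monotonicity_vacant_general hsym μ hμiso o lam₁ lam₂ hlam P₁ P₂ hP₁ hP₂
    hNumComps h

end BooleanModel
end
end

section
/- Let P be an insertion-tolerant probability measure on M(X) and let B ⊆ X be Borel with 0 < μ_X(B) < ∞. Then for every random measurable set S = S(ω) ⊆ B that is measurable with respect to σ(ω|_{B^c}) and satisfies μ_X(S) > 0 almost surely, one has P[ω(S) = ω(B) = 1 | ω|_{B^c}] > 0 P-almost surely on the event {ω(B) = 0}. -/
open MeasureTheory Metric Set Bornology Function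
open scoped ENNReal NNReal unitInterval

noncomputable section

namespace BooleanModel

/-!
By Fubini, insertion tolerance says that an almost sure property of `ω` still holds, for `P`-a.e.
`ω` and `μ`-a.e. `y`, after `y` is added to `ω`. Apply this to the property that
`P[A | ω|_{Bᶜ}] > 0` whenever `ω` lies in the event `A = {ω(S) = ω(B) = 1}`. If `ω(B) = 0` and
`μ(S) > 0`, then some `y ∈ S` is admissible; adding it puts the configuration into `A` without
changing `ω|_{Bᶜ}`, hence without changing the conditional probability.
-/

theorem ae_condExp_pos_of_pos {Ω : Type*} {m m₀ : MeasurableSpace Ω} {P : Measure Ω}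
    (hm : m ≤ m₀) [SigmaFinite (P.trim hm)] {f : Ω → ℝ} (hf : Integrable f P) (hf0 : 0 ≤ᵐ[P] f) :
    ∀ᵐ ω ∂P, 0 < f ω → 0 < P[f | m] ω := by
  set s : Set Ω := P[f | m] ⁻¹' Iic 0
  have hs : MeasurableSet[m] s := stronglyMeasurable_condExp.measurable measurableSet_Iic
  have hf0s : 0 ≤ᵐ[P.restrict s] f := ae_restrict_of_ae hf0
  have integral_nonpos : ∫ ω in s, f ω ∂P ≤ 0 := by
    rw [← setIntegral_condExp hm hf hs]
    exact setIntegral_nonpos (hm s hs) fun _ hω ↦ hω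
  have integral_eq_zero : ∫ ω in s, f ω ∂P = 0 :=
    integral_nonpos.antisymm (integral_nonneg_of_ae hf0s)
  have f_eq_zero : ∀ᵐ ω ∂P, ω ∈ s → f ω = 0 :=
    (ae_restrict_iff' (hm s hs)).1
      ((setIntegral_eq_zero_iff_of_nonneg_ae hf0s hf.integrableOn).1 integral_eq_zero)
  filter_upwards [f_eq_zero] with ω hω hpos
  exact lt_of_not_ge fun hle ↦ hpos.ne' (hω hle)

namespace Config

section Deterministic

variable {X : Type*} [MetricSpace X] {B C : Set X} {y : X} {s : Config X}

theorem count_mono (h : B ⊆ C) : count B s ≤ count C s :=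
  encard_le_encard (inter_subset_inter_right s.1 h)

theorem count_restrict (B C : Set X) (s : Config X) :
    count C (restrict B s) = count (Bᶜ ∩ C) s :=
  congrArg encard (inter_assoc _ _ _)

theorem count_insertPt_of_mem_diff (hy : y ∈ C \ s.1) :
    count C (insertPt y s) = count C s + 1 := by
  change (insert y s.1 ∩ C).encard = (s.1 ∩ C).encard + 1
  rw [insert_inter_of_mem hy.1, encard_insert_of_notMem fun h ↦ hy.2 h.1]

theorem count_insertPt_of_notMem_diff (hy : y ∉ C \ s.1) :
    count C (insertPt y s) = count C s := by
  refine congrArg encard (Set.ext fun x ↦ and_congr_left fun hx ↦ ?_)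
  refine ⟨?_, Or.inr⟩
  rintro (rfl | hxs)
  · exact not_not.1 fun hxs ↦ hy ⟨hx, hxs⟩
  · exact hxs

theorem count_insertPt_eq_one (hy : y ∈ C) (hs : count C s = 0) :
    count C (insertPt y s) = 1 := by
  have inter_eq_empty : s.1 ∩ C = ∅ := encard_eq_zero.1 hs
  have hys : y ∉ s.1 := fun hys ↦ inter_eq_empty.subset ⟨hys, hy⟩
  rw [count_insertPt_of_mem_diff ⟨hy, hys⟩, hs, zero_add]

theorem restrict_insertPt (hy : y ∈ B) : restrict B (insertPt y s) = restrict B s :=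
  Subtype.ext (insert_inter_of_notMem fun hyc ↦ hyc hy)

theorem isClosed (s : Config X) : IsClosed s.1 := by
  refine isClosed_of_closure_subset fun y hy ↦ ?_
  have y_mem : y ∈ closure (ball y 1 ∩ s.1) :=
    isOpen_ball.inter_closure ⟨mem_ball_self one_pos, hy⟩
  rw [inter_comm, (s.2 (ball y 1) isBounded_ball).isClosed.closure_eq] at y_mem
  exact y_mem.1

theorem mem_iff_forall_count_ne_zero {b : Set (Set X)}
    (hb : TopologicalSpace.IsTopologicalBasis b) :
    y ∈ s.1 ↔ ∀ U ∈ b, y ∈ U → count U s ≠ 0 := by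
  rw [← s.isClosed.closure_eq, hb.mem_closure_iff]
  simp only [count, encard_ne_zero, inter_comm]

end Deterministic

section Measurability

variable {X : Type*} [MetricSpace X] [MeasurableSpace X]

theorem measurable_count {C : Set X} (hC : MeasurableSet C) :
    Measurable (count C : Config X → ℕ∞) :=
  measurable_to_countable' fun n ↦
    MeasurableSpace.measurableSet_generateFrom ⟨C, n, hC, rfl⟩

theorem measurable_of_measurable_count {α : Type*} [MeasurableSpace α] {f : α → Config X}
    (hf : ∀ C : Set X, MeasurableSet C → Measurable fun a ↦ count C (f a)) : Measurable f := by
  refine measurable_generateFrom ?_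
  rintro _ ⟨C, n, hC, rfl⟩
  exact hf C hC (measurableSet_singleton n)

theorem measurable_restrict {B : Set X} (hB : MeasurableSet B) :
    Measurable (restrict B : Config X → Config X) :=
  measurable_of_measurable_count fun C hC ↦ by
    simpa only [count_restrict] using measurable_count (hB.compl.inter hC)

variable [SecondCountableTopology X] [OpensMeasurableSpace X]

theorem measurableSet_setOf_mem : MeasurableSet {p : Config X × X | p.2 ∈ p.1.1} := by
  simp only [mem_iff_forall_count_ne_zero (TopologicalSpace.isBasis_countableBasis X),
    ofPred_forall]
  refine .biInter (TopologicalSpace.countable_countableBasis X) fun U hU ↦ ?_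
  have hU_meas : MeasurableSet U :=
    (TopologicalSpace.isOpen_of_mem_countableBasis hU).measurableSet
  exact (measurable_snd hU_meas).imp
    ((measurable_count hU_meas).comp measurable_fst (measurableSet_singleton 0)).compl

theorem measurable_insertPt : Measurable fun p : Config X × X ↦ insertPt p.2 p.1 := by
  classical
  refine measurable_of_measurable_count fun C hC ↦ ?_
  have count_eq : (fun p : Config X × X ↦ count C (insertPt p.2 p.1)) = fun p ↦
      if p.2 ∈ C \ p.1.1 then count C p.1 + 1 else count C p.1 := by
    funext p
    split_ifs with hp
    · exact count_insertPt_of_mem_diff hp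
    · exact count_insertPt_of_notMem_diff hp
  have count_measurable : Measurable fun p : Config X × X ↦ count C p.1 :=
    (measurable_count hC).comp measurable_fst
  rw [count_eq]
  exact Measurable.ite ((measurable_snd hC).diff measurableSet_setOf_mem)
    ((measurable_from_top (f := (· + 1))).comp count_measurable) count_measurable

end Measurability

end Config

section InsertionTolerance

variable {X : Type*} [MetricSpace X] [MeasurableSpace X] [SecondCountableTopology X]
  [OpensMeasurableSpace X] {μ : Measure X} {P : Measure (Config X)} {p : Config X → Prop}

theorem InsertionTolerant.ae_ae_restrict_insertPt (hP : InsertionTolerant μ P)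
    {B : Set X} (hB : MeasurableSet B) (hB_lt : μ B < ⊤) (hp : ∀ᵐ ω ∂P, p ω) :
    ∀ᵐ ω ∂P, ∀ᵐ y ∂μ.restrict B, p (Config.insertPt y ω) := by
  rcases eq_zero_or_pos (μ B) with hB0 | hB0
  · simp [Measure.restrict_eq_zero.2 hB0]
  have : IsFiniteMeasure (μ.restrict B) := ⟨by simpa using hB_lt⟩
  have ae_prod : ∀ᵐ q ∂P.prod ((μ B)⁻¹ • μ.restrict B), p (Config.insertPt q.2 q.1) :=
    ae_of_ae_map Config.measurable_insertPt.aemeasurable ((hP B hB hB0 hB_lt).ae_le hp)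
  filter_upwards [Measure.ae_ae_of_ae_prod ae_prod] with ω hω
  exact (Measure.ae_ennreal_smul_measure_iff (ENNReal.inv_ne_zero.2 hB_lt.ne)).1 hω

theorem InsertionTolerant.ae_ae_insertPt [SigmaFinite μ] (hP : InsertionTolerant μ P)
    (hp : ∀ᵐ ω ∂P, p ω) : ∀ᵐ ω ∂P, ∀ᵐ y ∂μ, p (Config.insertPt y ω) := by
  have ae_spanning : ∀ᵐ ω ∂P, ∀ n, ∀ᵐ y ∂μ.restrict (spanningSets μ n),
      p (Config.insertPt y ω) :=
    ae_all_iff.2 fun n ↦ hP.ae_ae_restrict_insertPt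
      (measurableSet_spanningSets μ n) (measure_spanningSets_lt_top μ n) hp
  filter_upwards [ae_spanning] with ω hω
  rwa [← ae_restrict_iUnion_iff, iUnion_spanningSets, Measure.restrict_univ] at hω

theorem conditional_insertion_positive_general [SigmaFinite μ] [IsFiniteMeasure P]
    (hP : InsertionTolerant μ P) {B : Set X} (hB : MeasurableSet B) {S : Config X → Set X}
    (hS_sub : ∀ ω, S ω ⊆ B) (hS_restrict : ∀ ω, S ω = S (Config.restrict B ω))
    (hS_meas : MeasurableSet {ω | Config.count (S ω) ω = 1 ∧ Config.count B ω = 1})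
    (hS_pos : ∀ᵐ ω ∂P, 0 < μ (S ω)) :
    ∀ᵐ ω ∂P, Config.count B ω = 0 →
      0 < (P[Set.indicator {ω | Config.count (S ω) ω = 1 ∧ Config.count B ω = 1}
              (fun _ ↦ (1 : ℝ))
            | MeasurableSpace.comap (Config.restrict B) Config.instMeasurableSpace]) ω := by
  set A : Set (Config X) := {ω | Config.count (S ω) ω = 1 ∧ Config.count B ω = 1}
  set f : Config X → ℝ := P[A.indicator (fun _ ↦ 1)
    | MeasurableSpace.comap (Config.restrict B) Config.instMeasurableSpace]
  have f_pos : ∀ᵐ ω ∂P, 0 < A.indicator (fun _ ↦ (1 : ℝ)) ω → 0 < f ω :=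
    ae_condExp_pos_of_pos (Config.measurable_restrict hB).comap_le
      ((integrable_const 1).indicator hS_meas)
      (ae_of_all P (indicator_nonneg fun _ _ ↦ zero_le_one))
  have f_factors : f.FactorsThrough (Config.restrict B) :=
    stronglyMeasurable_condExp.factorsThrough
  filter_upwards [hP.ae_ae_insertPt f_pos, hS_pos] with ω f_insertPt_pos hSω_pos hBω
  obtain ⟨y, hyS, hy⟩ :=
    ((frequently_ae_mem_iff.2 hSω_pos.ne').and_eventually f_insertPt_pos).exists
  have hyB : y ∈ B := hS_sub ω hyS
  have restrict_eq : Config.restrict B (Config.insertPt y ω) = Config.restrict B ω :=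
    Config.restrict_insertPt hyB
  have S_eq : S (Config.insertPt y ω) = S ω := by
    rw [hS_restrict (Config.insertPt y ω), restrict_eq, ← hS_restrict]
  have count_S_eq : Config.count (S ω) ω = 0 :=
    nonpos_iff_eq_zero.1 (hBω ▸ Config.count_mono (hS_sub ω))
  have insertPt_mem : Config.insertPt y ω ∈ A :=
    ⟨S_eq.symm ▸ Config.count_insertPt_eq_one hyS count_S_eq,
      Config.count_insertPt_eq_one hyB hBω⟩
  rw [← f_factors restrict_eq]
  exact hy (by simp [insertPt_mem])

end InsertionTolerance

/-- **Lemma (conditional insertion), Lemma 7(a).**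
If `P` is insertion-tolerant, `B` is Borel with `0 < μ B < ∞` and `S = S(ω) ⊆ B` is a
`σ(ω|_{B^c})`-measurable random subset of `B` with `μ(S) > 0` a.s., then
`P[ω(S) = ω(B) = 1 | ω|_{B^c}] > 0` a.s. on the event `{ω(B) = 0}`. -/
theorem conditional_insertion_positive
    {X : Type*} [MetricSpace X] [ProperSpace X] [CompleteSpace X] [SimplyConnectedSpace X]
    [NoncompactSpace X] [MeasurableSpace X] [BorelSpace X] [Nonempty X]
    (hsym : PointSymmetric X)
    (μ : Measure X)
    (hμiso : ∀ γ : X ≃ᵢ X, Measure.map γ μ = μ)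
    (hμball : ∀ (x : X) (r : ℝ), 0 < r → 0 < μ (closedBall x r) ∧ μ (closedBall x r) < ⊤)
    (P : Measure (Config X)) [IsProbabilityMeasure P]
    (hPins : InsertionTolerant μ P)
    (B : Set X) (hB : MeasurableSet B) (hB0 : 0 < μ B) (hB1 : μ B < ⊤)
    (S : Config X → Set X)
    (hSsub : ∀ ω, S ω ⊆ B)
    (hSBorel : ∀ ω, MeasurableSet (S ω))
    (hSfac : ∀ ω, S ω = S (Config.restrict B ω))
    (hSmeas : MeasurableSet
      {ω : Config X | Config.count (S ω) ω = 1 ∧ Config.count B ω = 1})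
    (hSpos : ∀ᵐ ω ∂P, 0 < μ (S ω)) :
    ∀ᵐ ω ∂P, Config.count B ω = 0 →
      0 < (P[Set.indicator
              {ω' : Config X | Config.count (S ω') ω' = 1 ∧ Config.count B ω' = 1}
              (fun _ => (1 : ℝ))
            | MeasurableSpace.comap (Config.restrict B) Config.instMeasurableSpace]) ω := by
  have : IsLocallyFiniteMeasure μ :=
    ⟨fun x ↦ ⟨closedBall x 1, closedBall_mem_nhds x one_pos, (hμball x 1 one_pos).2⟩⟩
  exact conditional_insertion_positive_general hPins hB hSsub hSfac hSmeas hSpos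

end BooleanModel
end
end
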